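/- Let 1 < p ≤ q < p*, let Ω ⊂ ℝ^N be an open bounded convex set, and let u be a Lipschitz function on the closure of Ω with ∫_Ω |u|^{q−2} u dx = 0, ∫_Ω |u|^q dx = 1, and ∫_Ω |∇u|^p dx = μ_{p,q}(Ω) (i.e., u attains the infimum defining μ_{p,q}(Ω)). Then every connected component of the open set {x ∈ Ω : u(x) > 0} and every connected component of {x ∈ Ω : u(x) < 0} has closure intersecting ∂Ω; that is, no nodal domain of u is compactly contained in Ω, so u has no closed interior nodal line. -/

import Mathlib

open MeasureTheory Metric Set Real

noncomputable section

/-- The Rayleigh quotient `(∫_Ω |∇v|^p) / (∫_Ω |v|^q)^(p/q)`, where the gradient is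
understood as the (a.e. defined) Fréchet derivative. -/
def rayleighQuot {N : ℕ} (p q : ℝ) (Ω : Set (EuclideanSpace ℝ (Fin N)))
    (v : EuclideanSpace ℝ (Fin N) → ℝ) : ℝ :=
  (∫ x in Ω, ‖fderiv ℝ v x‖ ^ p) / (∫ x in Ω, |v x| ^ q) ^ (p / q)

/-- The first (generalized) Dirichlet eigenvalue `λ_{p,q}(Ω)`: infimum of the Rayleigh
quotient over nontrivial smooth functions compactly supported in `Ω`. -/
def lambdaPQ {N : ℕ} (p q : ℝ) (Ω : Set (EuclideanSpace ℝ (Fin N))) : ℝ :=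
  sInf { R : ℝ | ∃ v : EuclideanSpace ℝ (Fin N) → ℝ,
    ContDiff ℝ (⊤ : ℕ∞) v ∧ HasCompactSupport v ∧ tsupport v ⊆ Ω ∧
    (∃ x ∈ Ω, v x ≠ 0) ∧ R = rayleighQuot p q Ω v }

/-- The first nontrivial (generalized) Neumann eigenvalue `μ_{p,q}(Ω)`: infimum of the
Rayleigh quotient over nontrivial Lipschitz functions on the closure of `Ω` satisfying
the constraint `∫_Ω |v|^(q-2) v = 0`. -/
def muPQ {N : ℕ} (p q : ℝ) (Ω : Set (EuclideanSpace ℝ (Fin N))) : ℝ :=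
  sInf { R : ℝ | ∃ v : EuclideanSpace ℝ (Fin N) → ℝ, ∃ K : NNReal,
    LipschitzOnWith K v (closure Ω) ∧ (∃ x ∈ Ω, v x ≠ 0) ∧
    (∫ x in Ω, |v x| ^ (q - 2) * v x) = 0 ∧ R = rayleighQuot p q Ω v }

/-- `q` is below the critical Sobolev exponent `p* = Np/(N-p)` (with `p* = ∞` if `p ≥ N`). -/
def ltCritical (N : ℕ) (p q : ℝ) : Prop := p < N → q < N * p / (N - p)

end

/-!
Suppose a positive nodal domain `D` of the minimizer `u` had closure inside `Ω`, and put
`w = u · 1_D`. Testing minimality with `u - δ w + c`, where `c` restores the constraint, and letting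
`δ → 0` gives `∫ |∇w| ^ p ≤ μ ∫ w ^ q`. As `diam D < diam Ω`, the function `w` can be dilated by a
factor `ρ > 1`, keeping its `L^q` mass and the bound `diam Ω` on the diameter of its support;
subcriticality of `q` makes the energy inequality strict.

The Schwarz symmetrisation of the dilated function keeps the mass and, by the Pólya–Szegő
inequality, does not increase the energy; by the isodiametric inequality it lives in a ball of
radius `diam Ω / 2`. Pólya–Szegő is obtained by differentiating at `h = 0` the effect of
symmetrisation on `∫ (Q_h w - w)`, where `Q_h` is the Hopf–Lax semigroup, whose superlevel sets are
controlled by the Brunn–Minkowski inequality. Truncating the radial profile from above at a suitable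
height makes the energy inequality hold on every centred ball.

Two copies of the truncated profile, centred at the endpoints of a diameter of `closure Ω`, have
disjoint supports. Seen from either centre the convex set `Ω` is star-shaped, so each copy still
satisfies the energy inequality on `Ω`, and the two masses on `Ω` add up to at most `1`, because two
points of the open set `Ω` are at distance less than `diam Ω`. A combination `a f₀ - b f₁`
satisfying the constraint then has Rayleigh quotient less than `μ`, a contradiction. The negative
nodal domains are handled by replacing `u` with `-u`.
-/

open scoped ENNReal NNReal Pointwise Topology

section BrunnMinkowski

theorem volume_add_volume_le_of_isCompact {K L : Set ℝ} (hK : IsCompact K) (hL : IsCompact L)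
    (hKn : K.Nonempty) (hLn : L.Nonempty) : volume K + volume L ≤ volume (K + L) := by
  obtain ⟨a, ha, hamax⟩ := hK.exists_isGreatest hKn
  obtain ⟨b, hb, hbmin⟩ := hL.exists_isLeast hLn
  have translates_meet_once : volume ((· + b) '' K ∩ (a + ·) '' L) = 0 := by
    refine measure_mono_null (t := {a + b}) ?_ (by simp)
    rintro z ⟨⟨x, hx, rfl⟩, ⟨y, hy, hxy⟩⟩
    have hxa : x ≤ a := hamax hx
    have hby : b ≤ y := hbmin hy
    simp only [mem_singleton_iff] at hxy ⊢
    linarith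
  calc volume K + volume L
      = volume ((· + b) '' K) + volume ((a + ·) '' L) := by simp
    _ = volume ((· + b) '' K ∪ (a + ·) '' L) := by
      rw [← measure_union_add_inter _ (hL.image (by fun_prop)).measurableSet,
        translates_meet_once, add_zero]
    _ ≤ volume (K + L) := by
      refine measure_mono (union_subset ?_ ?_)
      · exact image_subset_iff.2 fun x hx => add_mem_add hx hb
      · exact image_subset_iff.2 fun y hy => add_mem_add ha hy

theorem volume_add_volume_le {A B : Set ℝ} (hA : MeasurableSet A) (hB : MeasurableSet B)
    (hAn : A.Nonempty) (hBn : B.Nonempty) : volume A + volume B ≤ volume (A + B) := by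
  obtain ⟨a, ha⟩ := hAn
  obtain ⟨b, hb⟩ := hBn
  rw [hA.measure_eq_iSup_isCompact, hB.measure_eq_iSup_isCompact]
  simp only [iSup_and']
  refine ENNReal.biSup_add_biSup_le' (p := fun K => K ⊆ A ∧ IsCompact K)
    (q := fun L => L ⊆ B ∧ IsCompact L) ⟨∅, by simp⟩ ⟨∅, by simp⟩ ?_
  rintro K ⟨hKA, hK⟩ L ⟨hLB, hL⟩
  calc volume K + volume L ≤ volume (insert a K) + volume (insert b L) := by
        gcongr <;> simp
    _ ≤ volume (insert a K + insert b L) :=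
        volume_add_volume_le_of_isCompact (hK.insert a) (hL.insert b) (by simp) (by simp)
    _ ≤ volume (A + B) := by
        gcongr
        exacts [insert_subset ha hKA, insert_subset hb hLB]

theorem lintegral_eq_lintegral_meas_ofReal_lt {α : Type*} [MeasurableSpace α] {μ : Measure α}
    {f : α → ℝ≥0∞} (hf : Measurable f) (hfin : ∀ x, f x ≠ ∞) :
    ∫⁻ x, f x ∂μ = ∫⁻ t in Ioi (0 : ℝ), μ {x | ENNReal.ofReal t < f x} := by
  calc ∫⁻ x, f x ∂μ = ∫⁻ x, ENNReal.ofReal (f x).toReal ∂μ := by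
        simp only [ENNReal.ofReal_toReal (hfin _)]
    _ = ∫⁻ t in Ioi (0 : ℝ), μ {x | t < (f x).toReal} :=
        lintegral_eq_lintegral_meas_lt _ (ae_of_all _ fun _ => ENNReal.toReal_nonneg)
          hf.ennreal_toReal.aemeasurable
    _ = _ := setLIntegral_congr_fun measurableSet_Ioi fun t (ht : 0 < t) => by
        simp only [ENNReal.ofReal_lt_iff_lt_toReal ht.le (hfin _)]

theorem ennreal_geom_mean_le_arith_mean {a b : ℝ} (ha : 0 < a) (hb : 0 < b) (hab : a + b = 1)
    (x y : ℝ≥0∞) : x ^ a * y ^ b ≤ ENNReal.ofReal a * x + ENNReal.ofReal b * y := by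
  rcases eq_or_ne x ⊤ with rfl | hx
  · simp [ENNReal.mul_top, ha]
  rcases eq_or_ne y ⊤ with rfl | hy
  · simp [ENNReal.mul_top, hb]
  lift x to ℝ≥0 using hx
  lift y to ℝ≥0 using hy
  have amgm := NNReal.geom_mean_le_arith_mean2_weighted a.toNNReal b.toNNReal x y
    (by rw [← Real.toNNReal_add ha.le hb.le, hab, Real.toNNReal_one])
  rw [Real.coe_toNNReal _ ha.le, Real.coe_toNNReal _ hb.le] at amgm
  rw [← ENNReal.coe_rpow_of_nonneg _ ha.le, ← ENNReal.coe_rpow_of_nonneg _ hb.le]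
  simpa only [ENNReal.ofReal] using mod_cast amgm

/-- The Prékopa–Leindler inequality for the measure `μ`: if `h` dominates the geometric mean of
`f` and `g` at every convex combination, its integral dominates that of the integrals. -/
def PrekopaLeindler {E : Type*} [AddCommGroup E] [Module ℝ E] [MeasurableSpace E]
    (μ : Measure E) : Prop :=
  ∀ ⦃a b : ℝ⦄, 0 < a → 0 < b → a + b = 1 → ∀ ⦃f g h : E → ℝ≥0∞⦄,
    Measurable f → Measurable g → Measurable h →
    (∀ x y, f x ^ a * g y ^ b ≤ h (a • x + b • y)) →
    (∫⁻ x, f x ∂μ) ^ a * (∫⁻ x, g x ∂μ) ^ b ≤ ∫⁻ x, h x ∂μ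

section Line

variable {a b : ℝ} {f g h : ℝ → ℝ≥0∞}

theorem ofReal_mul_volume_superlevel_add_le (ha : 0 < a) (hb : 0 < b) (hab : a + b = 1)
    (hf : Measurable f) (hg : Measurable g)
    (hfgh : ∀ x y, f x ^ a * g y ^ b ≤ h (a * x + b * y)) {t : ℝ≥0∞}
    (htf : ∃ x, t < f x) (htg : ∃ x, t < g x) :
    ENNReal.ofReal a * volume {x | t < f x} + ENNReal.ofReal b * volume {x | t < g x}
      ≤ volume {x | t < h x} := by
  calc _ = volume (a • {x | t < f x}) + volume (b • {x | t < g x}) := by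
        simp [Measure.addHaar_smul, abs_of_pos ha, abs_of_pos hb]
    _ ≤ volume (a • {x | t < f x} + b • {x | t < g x}) :=
        volume_add_volume_le ((measurableSet_lt measurable_const hf).const_smul₀ _)
          ((measurableSet_lt measurable_const hg).const_smul₀ _)
          (Nonempty.smul_set htf) (Nonempty.smul_set htg)
    _ ≤ volume {x | t < h x} := by
        refine measure_mono ?_
        rintro _ ⟨_, ⟨x, hx, rfl⟩, _, ⟨y, hy, rfl⟩, rfl⟩
        simp only [mem_ofPred_eq] at hx hy
        refine lt_of_lt_of_le ?_ (hfgh x y)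
        calc t = t ^ a * t ^ b := by
              rw [← ENNReal.rpow_add_of_nonneg _ _ ha.le hb.le, hab, ENNReal.rpow_one]
          _ < f x ^ a * g y ^ b :=
              ENNReal.mul_lt_mul (ENNReal.rpow_lt_rpow hx ha) (ENNReal.rpow_lt_rpow hy hb)

theorem ofReal_mul_lintegral_add_le_of_iSup_eq_one (ha : 0 < a) (hb : 0 < b) (hab : a + b = 1)
    (hf : Measurable f) (hg : Measurable g) (hh : Measurable h)
    (hf1 : ⨆ x, f x = 1) (hg1 : ⨆ x, g x = 1)
    (hfgh : ∀ x y, f x ^ a * g y ^ b ≤ h (a * x + b * y)) :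
    ENNReal.ofReal a * (∫⁻ x, f x) + ENNReal.ofReal b * (∫⁻ x, g x) ≤ ∫⁻ x, h x := by
  have f_le x : f x ≤ 1 := hf1 ▸ le_iSup f x
  have g_le x : g x ≤ 1 := hg1 ▸ le_iSup g x
  have measurable_level (k : ℝ → ℝ≥0∞) :
      Measurable fun t : ℝ => volume {x | ENNReal.ofReal t < k x} :=
    Antitone.measurable fun s t hst => measure_mono fun x (hx : ENNReal.ofReal t < k x) =>
      (ENNReal.ofReal_le_ofReal hst).trans_lt hx
  calc _ = ∫⁻ t in Ioi (0 : ℝ), (ENNReal.ofReal a * volume {x | ENNReal.ofReal t < f x}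
          + ENNReal.ofReal b * volume {x | ENNReal.ofReal t < g x}) := by
        rw [lintegral_add_left ((measurable_level f).const_mul _),
          lintegral_const_mul _ (measurable_level f), lintegral_const_mul _ (measurable_level g),
          lintegral_eq_lintegral_meas_ofReal_lt hf fun x => ne_top_of_le_ne_top (by simp) (f_le x),
          lintegral_eq_lintegral_meas_ofReal_lt hg fun x => ne_top_of_le_ne_top (by simp) (g_le x)]
    _ ≤ ∫⁻ t in Ioi (0 : ℝ), volume {x | ENNReal.ofReal t < min (h x) 1} := by
        refine lintegral_mono fun t => ?_
        rcases lt_or_ge (ENNReal.ofReal t) 1 with ht | ht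
        · refine ofReal_mul_volume_superlevel_add_le ha hb hab hf hg (fun x y => ?_)
            (lt_iSup_iff.1 (hf1 ▸ ht)) (lt_iSup_iff.1 (hg1 ▸ ht))
          exact le_min (hfgh x y)
            (mul_le_one' (ENNReal.rpow_le_one (f_le x) ha.le) (ENNReal.rpow_le_one (g_le y) hb.le))
        · have no_level {k : ℝ → ℝ≥0∞} (hk : ∀ x, k x ≤ 1) :
              {x | ENNReal.ofReal t < k x} = ∅ :=
            eq_empty_of_forall_notMem fun x hx => ((hk x).trans ht).not_gt hx
          simp [no_level f_le, no_level g_le]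
    _ = ∫⁻ x, min (h x) 1 := (lintegral_eq_lintegral_meas_ofReal_lt (hh.min measurable_const)
        fun x => ne_top_of_le_ne_top (by simp) (min_le_right _ _)).symm
    _ ≤ ∫⁻ x, h x := lintegral_mono fun x => min_le_left _ _

theorem lintegral_rpow_mul_lintegral_rpow_le_of_iSup_ne_top (ha : 0 < a) (hb : 0 < b)
    (hab : a + b = 1) (hf : Measurable f) (hg : Measurable g) (hh : Measurable h)
    (hfb : ⨆ x, f x ≠ ∞) (hgb : ⨆ x, g x ≠ ∞)
    (hfgh : ∀ x y, f x ^ a * g y ^ b ≤ h (a * x + b * y)) :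
    (∫⁻ x, f x) ^ a * (∫⁻ x, g x) ^ b ≤ ∫⁻ x, h x := by
  set F := ⨆ x, f x with hF
  set G := ⨆ x, g x with hG
  rcases eq_or_ne F 0 with hF0 | hF0
  · simp [ENNReal.iSup_eq_zero.1 (hF.symm.trans hF0), ha]
  rcases eq_or_ne G 0 with hG0 | hG0
  · simp [ENNReal.iSup_eq_zero.1 (hG.symm.trans hG0), hb]
  have normalised : ENNReal.ofReal a * (∫⁻ x, F⁻¹ * f x) + ENNReal.ofReal b * (∫⁻ x, G⁻¹ * g x)
      ≤ ∫⁻ x, (F⁻¹ ^ a * G⁻¹ ^ b) * h x := by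
    refine ofReal_mul_lintegral_add_le_of_iSup_eq_one ha hb hab (hf.const_mul _) (hg.const_mul _)
      (hh.const_mul _) ?_ ?_ fun x y => ?_
    · rw [← ENNReal.mul_iSup, ← hF, ENNReal.inv_mul_cancel hF0 hfb]
    · rw [← ENNReal.mul_iSup, ← hG, ENNReal.inv_mul_cancel hG0 hgb]
    · rw [ENNReal.mul_rpow_of_nonneg _ _ ha.le, ENNReal.mul_rpow_of_nonneg _ _ hb.le,
        mul_mul_mul_comm]
      gcongr
      exact hfgh x y
  have scaled := (ennreal_geom_mean_le_arith_mean ha hb hab _ _).trans normalised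
  rw [lintegral_const_mul _ hf, lintegral_const_mul _ hg, lintegral_const_mul _ hh,
    ENNReal.mul_rpow_of_nonneg _ _ ha.le, ENNReal.mul_rpow_of_nonneg _ _ hb.le,
    mul_mul_mul_comm] at scaled
  refine (ENNReal.mul_le_mul_iff_right ?_ ?_).1 scaled
  · simp [ENNReal.rpow_eq_zero_iff, hfb, hgb, ha.le, hb.le]
  · exact ENNReal.mul_ne_top (ENNReal.rpow_ne_top_of_nonneg ha.le (ENNReal.inv_ne_top.2 hF0))
      (ENNReal.rpow_ne_top_of_nonneg hb.le (ENNReal.inv_ne_top.2 hG0))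

end Line

theorem lintegral_eq_iSup_lintegral_min_natCast {α : Type*} [MeasurableSpace α] {μ : Measure α}
    {f : α → ℝ≥0∞} (hf : Measurable f) : ∫⁻ x, f x ∂μ = ⨆ n : ℕ, ∫⁻ x, min (f x) n ∂μ := by
  rw [← lintegral_iSup (fun n => hf.min measurable_const)
    fun m n hmn x => min_le_min_left _ (by exact_mod_cast hmn)]
  simp only [← inf_iSup_eq, ENNReal.iSup_natCast, inf_top_eq]

namespace PrekopaLeindler

theorem volume_real : PrekopaLeindler (volume : Measure ℝ) := by
  intro a b ha hb hab f g h hf hg hh hfgh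
  rw [lintegral_eq_iSup_lintegral_min_natCast hf, lintegral_eq_iSup_lintegral_min_natCast hg,
    ← ENNReal.orderIsoRpow_apply a ha, ← ENNReal.orderIsoRpow_apply b hb, OrderIso.map_iSup,
    OrderIso.map_iSup]
  simp only [ENNReal.orderIsoRpow_apply]
  simp only [ENNReal.iSup_mul, ENNReal.mul_iSup]
  have truncation_ne_top (k : ℝ → ℝ≥0∞) (n : ℕ) : ⨆ x, min (k x) n ≠ ∞ :=
    ne_top_of_le_ne_top (ENNReal.natCast_ne_top n) (iSup_le fun x => min_le_right _ _)
  refine iSup_le fun m => iSup_le fun n =>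
    lintegral_rpow_mul_lintegral_rpow_le_of_iSup_ne_top ha hb hab (hf.min measurable_const)
    (hg.min measurable_const) hh (truncation_ne_top f _) (truncation_ne_top g _) fun x y =>
      (?_ : _ ≤ _).trans (hfgh x y)
  gcongr <;> exact min_le_left _ _

variable {E F : Type*} [AddCommGroup E] [Module ℝ E] [MeasurableSpace E]
  [AddCommGroup F] [Module ℝ F] [MeasurableSpace F] {μ : Measure E} {ν : Measure F}

theorem dirac (x : E) : PrekopaLeindler (Measure.dirac x) := by
  intro a b _ _ hab f g h hf hg hh hfgh
  simpa [lintegral_dirac' x hf, lintegral_dirac' x hg, lintegral_dirac' x hh, ← add_smul, hab]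
    using hfgh x x

theorem map (hμ : PrekopaLeindler μ) {L : E →ₗ[ℝ] F} (hL : Measurable L) :
    PrekopaLeindler (μ.map L) := by
  intro a b ha hb hab f g h hf hg hh hfgh
  simp only [lintegral_map hf hL, lintegral_map hg hL, lintegral_map hh hL]
  refine hμ ha hb hab (hf.comp hL) (hg.comp hL) (hh.comp hL) fun x y => ?_
  simpa using hfgh (L x) (L y)

theorem smul (hμ : PrekopaLeindler μ) (c : ℝ≥0∞) : PrekopaLeindler (c • μ) := by
  intro a b ha hb hab f g h hf hg hh hfgh
  simp only [lintegral_smul_measure, smul_eq_mul]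
  rw [ENNReal.mul_rpow_of_nonneg _ _ ha.le, ENNReal.mul_rpow_of_nonneg _ _ hb.le,
    mul_mul_mul_comm, ← ENNReal.rpow_add_of_nonneg _ _ ha.le hb.le, hab, ENNReal.rpow_one]
  gcongr
  exact hμ ha hb hab hf hg hh hfgh

theorem prod [SFinite ν] (hμ : PrekopaLeindler μ) (hν : PrekopaLeindler ν) :
    PrekopaLeindler (μ.prod ν) := by
  intro a b ha hb hab f g h hf hg hh hfgh
  rw [lintegral_prod _ hf.aemeasurable, lintegral_prod _ hg.aemeasurable,
    lintegral_prod _ hh.aemeasurable]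
  refine hμ ha hb hab hf.lintegral_prod_right' hg.lintegral_prod_right' hh.lintegral_prod_right'
    fun x y => ?_
  exact hν ha hb hab (hf.comp measurable_prodMk_left) (hg.comp measurable_prodMk_left)
    (hh.comp measurable_prodMk_left) fun x' y' => by simpa using hfgh (x, x') (y, y')

theorem volume_pi (n : ℕ) : PrekopaLeindler (volume : Measure (Fin n → ℝ)) := by
  induction n with
  | zero =>
    rw [Measure.volume_pi_eq_dirac 0]
    exact dirac 0
  | succ n ih =>
    let cons : ℝ × (Fin n → ℝ) →ₗ[ℝ] (Fin (n + 1) → ℝ) :=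
      (Fin.consLinearEquiv ℝ fun _ => ℝ).toLinearMap
    have cons_eq : ⇑cons = (MeasurableEquiv.piFinSuccAbove (fun _ => ℝ) 0).symm := by
      ext ⟨t, y⟩ : 1
      simp [cons, MeasurableEquiv.piFinSuccAbove_symm_apply, Fin.insertNthEquiv,
        Fin.consLinearEquiv, Fin.consEquiv]
    have measurePreserving_cons : MeasurePreserving cons :=
      cons_eq ▸ (volume_preserving_piFinSuccAbove (fun _ => ℝ) 0).symm
    rw [← measurePreserving_cons.map_eq, Measure.volume_eq_prod]
    exact (volume_real.prod ih).map measurePreserving_cons.measurable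

end PrekopaLeindler

variable {E : Type*} [NormedAddCommGroup E] [NormedSpace ℝ E] [FiniteDimensional ℝ E]
  [MeasurableSpace E] [BorelSpace E] (μ : Measure E) [μ.IsAddHaarMeasure]

theorem prekopaLeindler_addHaar : PrekopaLeindler μ := by
  let L : (Fin (Module.finrank ℝ E) → ℝ) ≃L[ℝ] E :=
    (ContinuousLinearEquiv.ofFinrankEq (by simp))
  have hL : PrekopaLeindler ((volume : Measure (Fin (Module.finrank ℝ E) → ℝ)).map L) :=
    (PrekopaLeindler.volume_pi _).map (L := L.toLinearMap) L.continuous.measurable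
  rw [Measure.isAddLeftInvariant_eq_smul μ (volume.map L)]
  exact hL.smul _

theorem measure_rpow_mul_measure_rpow_le {a b : ℝ} (ha : 0 < a) (hb : 0 < b) (hab : a + b = 1)
    {A B C : Set E} (hA : MeasurableSet A) (hB : MeasurableSet B) (hC : MeasurableSet C)
    (hABC : a • A + b • B ⊆ C) : μ A ^ a * μ B ^ b ≤ μ C := by
  have := prekopaLeindler_addHaar μ ha hb hab (f := A.indicator 1) (g := B.indicator 1)
    (h := C.indicator 1) (measurable_one.indicator hA) (measurable_one.indicator hB)
    (measurable_one.indicator hC) fun x y => ?_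
  · simpa only [lintegral_indicator_one hA, lintegral_indicator_one hB,
      lintegral_indicator_one hC] using this
  · by_cases hx : x ∈ A
    · by_cases hy : y ∈ B
      · have : a • x + b • y ∈ C := hABC (add_mem_add (smul_mem_smul_set hx) (smul_mem_smul_set hy))
        simp [hx, hy, this]
      · simp [hy, hb]
    · simp [hx, ha]

theorem measure_unitBall_le_measure_inv_smul_iff {s : ℝ} (hs : 0 < s) (S : Set E) :
    μ (ball 0 1) ≤ μ (s⁻¹ • S) ↔ μ (ball 0 s) ≤ μ S := by
  conv_rhs => rw [← smul_unitBall_of_pos hs, ← smul_inv_smul₀ hs.ne' S,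
    Measure.addHaar_smul, Measure.addHaar_smul]
  have factor_ne_zero : ENNReal.ofReal |s ^ Module.finrank ℝ E| ≠ 0 := by
    simp [hs.ne']
  exact (ENNReal.mul_le_mul_iff_right factor_ne_zero ENNReal.ofReal_ne_top).symm

theorem measure_ball_add_le_measure_thickening {A : Set E} (hA : MeasurableSet A) {r h : ℝ}
    (hr : 0 < r) (hh : 0 < h) (hrA : μ (ball 0 r) ≤ μ A) :
    μ (ball 0 (r + h)) ≤ μ (thickening h A) := by
  have hrh : 0 < r + h := by positivity
  have convex_combination_subset :
      (r / (r + h)) • (r⁻¹ • A) + (h / (r + h)) • ball (0 : E) 1 ⊆ (r + h)⁻¹ • thickening h A := by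
    rw [← add_ball_zero, smul_add, ← smul_unitBall_of_pos hh, smul_smul, smul_smul]
    apply Eq.subset
    congr 2 <;> field_simp
  have brunn_minkowski := measure_rpow_mul_measure_rpow_le μ (a := r / (r + h)) (b := h / (r + h))
    (by positivity) (by positivity) (by field_simp) (hA.const_smul₀ r⁻¹)
    measurableSet_ball (isOpen_thickening.measurableSet.const_smul₀ _) convex_combination_subset
  rw [← measure_unitBall_le_measure_inv_smul_iff μ hrh]
  calc μ (ball 0 1) = μ (ball 0 1) ^ (r / (r + h)) * μ (ball 0 1) ^ (h / (r + h)) := by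
        rw [← ENNReal.rpow_add_of_nonneg _ _ (by positivity) (by positivity), ← add_div,
          div_self hrh.ne', ENNReal.rpow_one]
    _ ≤ μ (r⁻¹ • A) ^ (r / (r + h)) * μ (ball 0 1) ^ (h / (r + h)) := by
        gcongr ?_ ^ _ * _
        exact (measure_unitBall_le_measure_inv_smul_iff μ hr A).2 hrA
    _ ≤ _ := brunn_minkowski

theorem measure_le_measure_closedBall_half {A : Set E} (hA : MeasurableSet A) {d : ℝ}
    (hd : ∀ x ∈ A, ∀ y ∈ A, dist x y ≤ d) : μ A ≤ μ (closedBall 0 (d / 2)) := by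
  have half_sub_subset : (1 / 2 : ℝ) • A + (1 / 2 : ℝ) • (-A) ⊆ closedBall 0 (d / 2) := by
    rintro _ ⟨_, ⟨x, hx, rfl⟩, _, ⟨y, hy, rfl⟩, rfl⟩
    have hxy := hd x hx (-y) hy
    rw [dist_eq_norm, sub_neg_eq_add] at hxy
    simp only [mem_closedBall, dist_zero_right, ← smul_add, norm_smul]
    norm_num
    linarith
  calc μ A = μ A ^ (1 / 2 : ℝ) * μ (-A) ^ (1 / 2 : ℝ) := by
        rw [Measure.measure_neg, ← ENNReal.rpow_add_of_nonneg _ _ (by norm_num) (by norm_num)]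
        norm_num
    _ ≤ μ (closedBall 0 (d / 2)) := measure_rpow_mul_measure_rpow_le μ (by norm_num) (by norm_num)
        (by norm_num) hA hA.neg measurableSet_closedBall half_sub_subset

end BrunnMinkowski

section HopfLax

/-- The Hopf–Lax semigroup `Q_h f` with Hamiltonian `‖·‖ ^ p / p`, in sup-convolution form; here
`p'` is the exponent conjugate to `p`. -/
noncomputable def hopfLax {E : Type*} [NormedAddCommGroup E] [NormedSpace ℝ E] (p' : ℝ)
    (f : E → ℝ) (h : ℝ) (x : E) : ℝ :=
  ⨆ v : E, (f (x + h • v) - h * (‖v‖ ^ p' / p'))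

variable {E : Type*} [NormedAddCommGroup E] [NormedSpace ℝ E] {f : E → ℝ} {p p' h : ℝ} {L : ℝ≥0}

theorem apply_add_smul_le (hf : LipschitzWith L f) (hh : 0 ≤ h) (x v : E) :
    f (x + h • v) ≤ f x + h * (L * ‖v‖) := by
  have := hf.le_add_mul (x + h • v) x
  rw [dist_self_add_left, norm_smul, norm_of_nonneg hh] at this
  linarith

theorem apply_add_smul_sub_le (hp : p.HolderConjugate p') (hh : 0 ≤ h) (hf : LipschitzWith L f)
    (x v : E) : f (x + h • v) - h * (‖v‖ ^ p' / p') ≤ f x + h * (L ^ p / p) := by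
  have young := young_inequality_of_nonneg L.2 (norm_nonneg v) hp
  have := mul_le_mul_of_nonneg_left young hh
  simp only [NNReal.val_eq_coe] at this
  linarith [apply_add_smul_le hf hh x v]

theorem hopfLax_le (hp : p.HolderConjugate p') (hh : 0 ≤ h) (hf : LipschitzWith L f) (x : E) :
    hopfLax p' f h x ≤ f x + h * (L ^ p / p) :=
  ciSup_le (apply_add_smul_sub_le hp hh hf x)

theorem bddAbove_range_hopfLax (hp : p.HolderConjugate p') (hh : 0 ≤ h) (hf : LipschitzWith L f)
    (x : E) : BddAbove (range fun v : E => f (x + h • v) - h * (‖v‖ ^ p' / p')) :=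
  ⟨f x + h * (L ^ p / p), forall_mem_range.2 (apply_add_smul_sub_le hp hh hf x)⟩

theorem lt_hopfLax_iff (hp : p.HolderConjugate p') (hh : 0 ≤ h) (hf : LipschitzWith L f) {x : E}
    {t : ℝ} : t < hopfLax p' f h x ↔ ∃ v : E, t < f (x + h • v) - h * (‖v‖ ^ p' / p') :=
  lt_ciSup_iff (bddAbove_range_hopfLax hp hh hf x)

theorem le_hopfLax (hp : p.HolderConjugate p') (hh : 0 ≤ h) (hf : LipschitzWith L f) (x v : E) :
    f (x + h • v) - h * (‖v‖ ^ p' / p') ≤ hopfLax p' f h x :=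
  le_ciSup (bddAbove_range_hopfLax hp hh hf x) v

theorem self_le_hopfLax (hp : p.HolderConjugate p') (hh : 0 ≤ h) (hf : LipschitzWith L f) (x : E) :
    f x ≤ hopfLax p' f h x := by
  simpa [zero_rpow hp.symm.ne_zero] using le_hopfLax hp hh hf x 0

theorem thickening_setOf_lt_subset_setOf_lt_hopfLax (hp : p.HolderConjugate p') (hh : 0 < h)
    (hf : LipschitzWith L f) (t : ℝ) (v : E) :
    thickening (h * ‖v‖) {x | t + h * (‖v‖ ^ p' / p') < f x} ⊆ {x | t < hopfLax p' f h x} := by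
  intro x hx
  obtain ⟨y, hy, hxy⟩ := mem_thickening_iff.1 hx
  have norm_le : ‖h⁻¹ • (y - x)‖ ≤ ‖v‖ := by
    rw [norm_smul, norm_of_nonneg (inv_nonneg.2 hh.le), ← dist_eq_norm, dist_comm,
      inv_mul_le_iff₀ hh]
    exact hxy.le
  have cost_le : h * (‖h⁻¹ • (y - x)‖ ^ p' / p') ≤ h * (‖v‖ ^ p' / p') := by
    have := hp.symm.pos
    gcongr
  have := le_hopfLax hp hh.le hf x (h⁻¹ • (y - x))
  rw [smul_inv_smul₀ hh.ne', add_sub_cancel] at this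
  simp only [mem_ofPred_eq] at hy ⊢
  linarith

theorem lowerSemicontinuous_hopfLax (hp : p.HolderConjugate p') (hh : 0 ≤ h)
    (hf : LipschitzWith L f) : LowerSemicontinuous (hopfLax p' f h) :=
  lowerSemicontinuous_ciSup (bddAbove_range_hopfLax hp hh hf) fun v =>
    (((hf.continuous.comp (by fun_prop : Continuous fun x => x + h • v)).sub
      continuous_const).lowerSemicontinuous)

theorem exists_forall_mul_le_rpow_div (hp : p.HolderConjugate p') (L : ℝ≥0) :
    ∃ V : ℝ, 0 < V ∧ ∀ s, V ≤ s → L * s ≤ s ^ p' / p' := by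
  have hp'0 : 0 < p' := hp.symm.pos
  have hp'1 : 0 < p' - 1 := hp.symm.sub_one_pos
  set V : ℝ := (p' * (L + 1)) ^ (p' - 1)⁻¹ with hV
  have hV0 : 0 < V := by positivity
  refine ⟨V, hV0, fun s hs => ?_⟩
  have hs0 : 0 < s := hV0.trans_le hs
  have slope_le : p' * (L + 1) ≤ s ^ (p' - 1) := by
    calc p' * (L + 1) = V ^ (p' - 1) := by rw [hV, rpow_inv_rpow (by positivity) hp'1.ne']
      _ ≤ s ^ (p' - 1) := by gcongr
  rw [rpow_sub_one hs0.ne', le_div_iff₀ hs0] at slope_le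
  rw [le_div_iff₀ hp'0]
  nlinarith

theorem apply_add_smul_sub_le_self (hh : 0 ≤ h) (hf : LipschitzWith L f) {x v : E}
    (hv : L * ‖v‖ ≤ ‖v‖ ^ p' / p') : f (x + h • v) - h * (‖v‖ ^ p' / p') ≤ f x := by
  linarith [apply_add_smul_le hf hh x v, mul_le_mul_of_nonneg_left hv hh]

theorem abs_hopfLax_sub_le_indicator (hp : p.HolderConjugate p') {V : ℝ} (hV0 : 0 ≤ V)
    (hV : ∀ s, V ≤ s → L * s ≤ s ^ p' / p') (hh : 0 ≤ h) (hh1 : h ≤ 1) (hf : LipschitzWith L f)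
    (x : E) :
    |hopfLax p' f h x - f x| ≤
      (cthickening V (tsupport f)).indicator (fun _ => h * ((L : ℝ) ^ p / p)) x := by
  rw [abs_of_nonneg (sub_nonneg.2 (self_le_hopfLax hp hh hf x)), sub_le_iff_le_add']
  by_cases hx : x ∈ cthickening V (tsupport f)
  · rw [indicator_of_mem hx]
    exact hopfLax_le hp hh hf x
  have hfx : f x = 0 := image_eq_zero_of_notMem_tsupport fun hx' =>
    hx (self_subset_cthickening _ hx')
  rw [indicator_of_notMem hx, add_zero]
  refine ciSup_le fun v => ?_
  rcases le_total V ‖v‖ with hv | hv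
  · exact apply_add_smul_sub_le_self hh hf (hV _ hv)
  · have hfv : f (x + h • v) = 0 := by
      refine image_eq_zero_of_notMem_tsupport fun hmem => hx ?_
      refine mem_cthickening_of_dist_le _ _ _ _ hmem ?_
      rw [dist_self_add_right, norm_smul, norm_of_nonneg hh]
      nlinarith [norm_nonneg v]
    have := hp.symm.pos
    have : 0 ≤ h * (‖v‖ ^ p' / p') := by positivity
    linarith

theorem exists_lt_apply_sub_rpow_div (hp : p.HolderConjugate p') (D : E →L[ℝ] ℝ) {a : ℝ}
    (ha : a < ‖D‖ ^ p / p) : ∃ v, a < D v - ‖v‖ ^ p' / p' := by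
  rcases (norm_nonneg D).eq_or_lt with hD | hD
  · refine ⟨0, ?_⟩
    simpa [zero_rpow hp.symm.ne_zero, ← hD, zero_rpow hp.ne_zero] using ha
  have eventually_lt : ∀ᶠ c in 𝓝[<] ‖D‖, a < c ^ p / p :=
    (((continuousAt_id.rpow_const (Or.inr hp.nonneg)).div_const p).eventually_const_lt
      ha).filter_mono nhdsWithin_le_nhds
  obtain ⟨c, hac, hc0, hcD⟩ := (eventually_lt.and (Ioo_mem_nhdsLT hD)).exists
  obtain ⟨u, hu1, hcu⟩ := D.exists_lt_apply_of_lt_opNorm hcD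
  wlog hDu : 0 ≤ D u generalizing u
  · exact this (-u) (by simpa using hu1) (by simpa using hcu) (by simpa using (not_le.1 hDu).le)
  rw [norm_of_nonneg hDu] at hcu
  have hp' := hp.symm.pos
  refine ⟨c ^ (p - 1) • u, hac.trans_le ?_⟩
  calc c ^ p / p = c ^ p - c ^ p / p' := by
        linear_combination c ^ p * hp.inv_add_inv_eq_one
    _ ≤ c ^ (p - 1) * D u - (c ^ (p - 1) * ‖u‖) ^ p' / p' := by
        rw [mul_rpow (by positivity) (norm_nonneg u), ← rpow_mul hc0.le, hp.sub_one_mul_conj]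
        have : c ^ p ≤ c ^ (p - 1) * D u := by
          calc c ^ p = c ^ (p - 1) * c := by rw [rpow_sub_one hc0.ne', div_mul_cancel₀ _ hc0.ne']
            _ ≤ c ^ (p - 1) * D u := by gcongr
        have : c ^ p * ‖u‖ ^ p' ≤ c ^ p :=
          mul_le_of_le_one_right (by positivity) (rpow_le_one (norm_nonneg u) hu1.le hp'.le)
        gcongr
    _ = D (c ^ (p - 1) • u) - ‖c ^ (p - 1) • u‖ ^ p' / p' := by
        rw [map_smul, smul_eq_mul, norm_smul, norm_of_nonneg (by positivity)]

theorem eventually_lt_hopfLax_sub_div (hp : p.HolderConjugate p') (hf : LipschitzWith L f) {x : E}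
    {D : E →L[ℝ] ℝ} (hD : HasFDerivAt f D x) {a : ℝ} (ha : a < ‖D‖ ^ p / p) :
    ∀ᶠ h in 𝓝[>] 0, a < (hopfLax p' f h x - f x) / h := by
  obtain ⟨v, hv⟩ := exists_lt_apply_sub_rpow_div hp D ha
  have difference_quotient :
      Filter.Tendsto (fun h : ℝ => h⁻¹ • (f (x + h • v) - f x)) (𝓝[>] 0) (𝓝 (D v)) :=
    (hD.hasLineDerivAt v).tendsto_slope_zero_right
  filter_upwards [difference_quotient.eventually_const_lt (lt_sub_iff_add_lt.1 hv),
    self_mem_nhdsWithin] with h hquot (hh : 0 < h)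
  rw [smul_eq_mul, ← div_eq_inv_mul, lt_div_iff₀ hh] at hquot
  rw [lt_div_iff₀ hh]
  linarith [le_hopfLax hp hh.le hf x v]

theorem eventually_hopfLax_sub_div_lt (hp : p.HolderConjugate p') (hf : LipschitzWith L f) {x : E}
    {D : E →L[ℝ] ℝ} (hD : HasFDerivAt f D x) {a : ℝ} (ha : ‖D‖ ^ p / p < a) :
    ∀ᶠ h in 𝓝[>] 0, (hopfLax p' f h x - f x) / h < a := by
  obtain ⟨V, hV0, hV⟩ := exists_forall_mul_le_rpow_div hp L
  obtain ⟨b, hDb, hba⟩ := exists_between ha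
  have hp0 : 0 < p := hp.pos
  have hb0 : 0 ≤ b := le_trans (by positivity) hDb.le
  have hη : 0 < (b - ‖D‖ ^ p / p) / V := div_pos (sub_pos.2 hDb) hV0
  obtain ⟨δ, hδ0, hδ⟩ := Metric.eventually_nhds_iff.1
    ((hasFDerivAt_iff_isLittleO_nhds_zero.1 hD).def hη)
  filter_upwards [Ioo_mem_nhdsGT (div_pos hδ0 hV0)] with h ⟨hh, hhδ⟩
  refine lt_of_le_of_lt ?_ hba
  rw [div_le_iff₀ hh, sub_le_iff_le_add']
  refine ciSup_le fun v => ?_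
  rcases le_total V ‖v‖ with hv | hv
  · linarith [apply_add_smul_sub_le_self hh.le hf (x := x) (hV _ hv), mul_nonneg hb0 hh.le]
  have norm_hv : ‖h • v‖ = h * ‖v‖ := by rw [norm_smul, norm_of_nonneg hh.le]
  have taylor : f (x + h • v) - f x - D (h • v) ≤ (b - ‖D‖ ^ p / p) / V * (h * ‖v‖) := by
    rw [lt_div_iff₀ hV0] at hhδ
    rw [← norm_hv]
    refine (le_abs_self _).trans (hδ ?_)
    rw [dist_zero_right, norm_hv]
    nlinarith
  have remainder_le : (b - ‖D‖ ^ p / p) / V * (h * ‖v‖) ≤ h * (b - ‖D‖ ^ p / p) := by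
    rw [div_mul_eq_mul_div, div_le_iff₀ hV0]
    nlinarith [mul_le_mul_of_nonneg_left hv (mul_nonneg hh.le (sub_nonneg.2 hDb.le))]
  have linear_le : D (h • v) ≤ h * (‖D‖ ^ p / p + ‖v‖ ^ p' / p') := by
    rw [map_smul, smul_eq_mul]
    gcongr
    exact (le_abs_self _).trans ((D.le_opNorm v).trans
      (young_inequality_of_nonneg (norm_nonneg D) (norm_nonneg v) hp))
  linarith

theorem tendsto_hopfLax_sub_div (hp : p.HolderConjugate p') (hf : LipschitzWith L f) {x : E}
    (hfx : DifferentiableAt ℝ f x) :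
    Filter.Tendsto (fun h => (hopfLax p' f h x - f x) / h) (𝓝[>] 0)
      (𝓝 (‖fderiv ℝ f x‖ ^ p / p)) :=
  tendsto_order.2 ⟨fun _ ha => eventually_lt_hopfLax_sub_div hp hf hfx.hasFDerivAt ha,
    fun _ ha => eventually_hopfLax_sub_div_lt hp hf hfx.hasFDerivAt ha⟩

variable [FiniteDimensional ℝ E] [MeasurableSpace E] [BorelSpace E] (μ : Measure E)
  [μ.IsAddHaarMeasure]

theorem integrable_indicator_cthickening_tsupport (hfc : HasCompactSupport f) (V c : ℝ) :
    Integrable ((cthickening V (tsupport f)).indicator fun _ => c) μ :=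
  have := FiniteDimensional.proper ℝ E
  have hK : IsCompact (cthickening V (tsupport f)) := IsCompact.cthickening hfc
  (integrable_indicator_iff hK.measurableSet).2 (integrableOn_const hK.measure_lt_top.ne)

theorem tendsto_integral_hopfLax_sub_div (hp : p.HolderConjugate p') (hf : LipschitzWith L f)
    (hfc : HasCompactSupport f) :
    Filter.Tendsto (fun h => ∫ x, (hopfLax p' f h x - f x) / h ∂μ) (𝓝[>] 0)
      (𝓝 (∫ x, ‖fderiv ℝ f x‖ ^ p / p ∂μ)) := by
  obtain ⟨V, hV0, hV⟩ := exists_forall_mul_le_rpow_div hp L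
  refine tendsto_integral_filter_of_dominated_convergence _ ?_ ?_
    (integrable_indicator_cthickening_tsupport μ hfc V ((L : ℝ) ^ p / p)) ?_
  · filter_upwards [self_mem_nhdsWithin] with h (hh : 0 < h)
    exact (((lowerSemicontinuous_hopfLax hp hh.le hf).measurable.sub
      hf.continuous.measurable).div_const h).aestronglyMeasurable
  · filter_upwards [Ioc_mem_nhdsGT one_pos] with h ⟨hh, hh1⟩
    refine ae_of_all _ fun x => ?_
    rw [norm_div, norm_of_nonneg hh.le, Real.norm_eq_abs, div_le_iff₀' hh, ← indicator_const_mul]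
    exact abs_hopfLax_sub_le_indicator hp hV0.le hV hh.le hh1 hf x
  · filter_upwards [hf.ae_differentiableAt] with x hx
    exact tendsto_hopfLax_sub_div hp hf hx

theorem integrable_hopfLax (hp : p.HolderConjugate p') (hh : 0 ≤ h) (hh1 : h ≤ 1)
    (hf : LipschitzWith L f) (hfc : HasCompactSupport f) : Integrable (hopfLax p' f h) μ := by
  obtain ⟨V, hV0, hV⟩ := exists_forall_mul_le_rpow_div hp L
  have integrable_sub : Integrable (fun x => hopfLax p' f h x - f x) μ :=
    (integrable_indicator_cthickening_tsupport μ hfc V (h * ((L : ℝ) ^ p / p))).mono'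
      ((lowerSemicontinuous_hopfLax hp hh hf).measurable.sub
        hf.continuous.measurable).aestronglyMeasurable
      (ae_of_all _ (abs_hopfLax_sub_le_indicator hp hV0.le hV hh hh1 hf))
  exact (integrable_sub.add (hf.continuous.integrable_of_hasCompactSupport hfc)).congr
    (ae_of_all _ fun x => sub_add_cancel _ _)

end HopfLax

section SchwarzProfile

theorem integral_le_integral_of_meas_lt_le {α : Type*} [MeasurableSpace α] {μ : Measure α}
    {f g : α → ℝ} (hf : Integrable f μ) (hg : Integrable g μ) (f_nonneg : ∀ x, 0 ≤ f x)
    (g_nonneg : ∀ x, 0 ≤ g x) (h : ∀ t, 0 ≤ t → μ {x | t < f x} ≤ μ {x | t < g x}) :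
    ∫ x, f x ∂μ ≤ ∫ x, g x ∂μ := by
  rw [← ENNReal.ofReal_le_ofReal_iff (integral_nonneg g_nonneg),
    ofReal_integral_eq_lintegral_ofReal hf (ae_of_all _ f_nonneg),
    ofReal_integral_eq_lintegral_ofReal hg (ae_of_all _ g_nonneg),
    lintegral_eq_lintegral_meas_lt _ (ae_of_all _ f_nonneg) hf.aemeasurable,
    lintegral_eq_lintegral_meas_lt _ (ae_of_all _ g_nonneg) hg.aemeasurable]
  exact setLIntegral_mono' measurableSet_Ioi fun t ht => h t (le_of_lt ht)

theorem setOf_lt_subset_tsupport {X : Type*} [TopologicalSpace X] (w : X → ℝ) {t : ℝ}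
    (ht : 0 ≤ t) : {x | t < w x} ⊆ tsupport w :=
  fun _ hx => subset_tsupport _ (ht.trans_lt hx).ne'

theorem exists_gt_lt_measure_setOf_lt {α : Type*} [MeasurableSpace α] (μ : Measure α)
    {w : α → ℝ} {t : ℝ} {m : ℝ≥0∞} (h : m < μ {x | t < w x}) :
    ∃ s > t, m < μ {x | s < w x} := by
  obtain ⟨u, u_anti, u_gt, u_tendsto⟩ := exists_seq_strictAnti_tendsto t
  have setOf_lt_eq : {x | t < w x} = ⋃ n, {x | u n < w x} := by
    ext x
    simp only [mem_ofPred_eq, mem_iUnion]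
    exact ⟨fun hx => (u_tendsto.eventually_lt_const hx).exists,
      fun ⟨n, hn⟩ => (u_gt n).trans hn⟩
  rw [setOf_lt_eq, Monotone.measure_iUnion, lt_iSup_iff] at h
  · exact h.imp' u fun n hn => ⟨u_gt n, hn⟩
  · exact fun i j hij x hx => (u_anti.antitone hij).trans_lt hx

theorem thickening_setOf_add_lt_subset {X : Type*} [PseudoMetricSpace X] {w : X → ℝ} {L : ℝ≥0}
    (hw : LipschitzWith L w) (t h : ℝ) :
    thickening h {x | t + L * h < w x} ⊆ {x | t < w x} := by
  intro x hx
  obtain ⟨y, hy, hxy⟩ := mem_thickening_iff.1 hx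
  have := hw.le_add_mul y x
  have := mul_le_mul_of_nonneg_left hxy.le L.2
  simp only [mem_ofPred_eq, NNReal.val_eq_coe, dist_comm y x] at *
  linarith

theorem measure_setOf_lt_ne_top {X : Type*} [TopologicalSpace X] [MeasurableSpace X]
    (μ : Measure X) [IsFiniteMeasureOnCompacts μ] {w : X → ℝ} {t : ℝ} (hwc : HasCompactSupport w)
    (ht : 0 ≤ t) : μ {x | t < w x} ≠ ∞ :=
  measure_ne_top_of_subset (setOf_lt_subset_tsupport w ht) hwc.isCompact.measure_lt_top.ne

theorem integrable_rpow_of_hasCompactSupport {X : Type*} [TopologicalSpace X] [MeasurableSpace X]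
    [OpensMeasurableSpace X] (μ : Measure X) [IsFiniteMeasureOnCompacts μ] {w : X → ℝ}
    (hw : Continuous w) (hwc : HasCompactSupport w) {q : ℝ} (hq : 0 < q) :
    Integrable (fun x => w x ^ q) μ :=
  (hw.rpow_const fun _ => .inr hq.le).integrable_of_hasCompactSupport
    (hwc.comp_left (g := (· ^ q)) (zero_rpow hq.ne'))

theorem hasCompactSupport_comp_norm {E : Type*} [NormedAddCommGroup E] [ProperSpace E]
    {ψ : ℝ → ℝ} {R : ℝ} (hψ : ∀ r, R ≤ r → ψ r = 0) : HasCompactSupport fun x : E => ψ ‖x‖ :=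
  HasCompactSupport.intro (isCompact_closedBall 0 R) fun x hx =>
    hψ _ (le_of_lt (by simpa using hx))

section Profile

variable {E : Type*} [NormedAddCommGroup E] [MeasurableSpace E] (μ : Measure E)

/-- The radial profile of the Schwarz symmetrisation of `w`: the value at `r` is the largest level
`t ≥ 0` whose superlevel set `{w > t}` has larger measure than the ball of radius `r`. If there is
no such level the supremum of the empty set gives the intended value `0`. -/
noncomputable def schwarzProfile (w : E → ℝ) (r : ℝ) : ℝ :=
  sSup {t : ℝ | 0 ≤ t ∧ μ (ball (0 : E) r) < μ {x | t < w x}}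

theorem schwarzProfile_nonneg (w : E → ℝ) (r : ℝ) : 0 ≤ schwarzProfile μ w r :=
  Real.sSup_nonneg fun _ ht => ht.1

variable {w : E → ℝ}

theorem lt_schwarzProfile_iff (hw : Continuous w) (hwc : HasCompactSupport w) {t : ℝ}
    (ht : 0 ≤ t) (r : ℝ) :
    t < schwarzProfile μ w r ↔ μ (ball (0 : E) r) < μ {x | t < w x} := by
  constructor
  · intro h
    have levels_nonempty : {t : ℝ | 0 ≤ t ∧ μ (ball (0 : E) r) < μ {x | t < w x}}.Nonempty := by
      by_contra! h_empty
      rw [schwarzProfile, h_empty, Real.sSup_empty] at h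
      exact ht.not_gt h
    obtain ⟨s, ⟨_, hs⟩, hts⟩ := exists_lt_of_lt_csSup levels_nonempty h
    exact hs.trans_le (measure_mono fun x hx => hts.trans hx)
  · intro h
    obtain ⟨W, hW⟩ := hw.bddAbove_range_of_hasCompactSupport hwc
    have levels_bddAbove : BddAbove {t : ℝ | 0 ≤ t ∧ μ (ball (0 : E) r) < μ {x | t < w x}} := by
      refine ⟨W, fun s ⟨_, hs⟩ => ?_⟩
      obtain ⟨x, hx⟩ := nonempty_of_measure_ne_zero (pos_of_gt hs).ne'
      exact (le_of_lt hx).trans (hW (mem_range_self x))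
    obtain ⟨s, hts, hs⟩ := exists_gt_lt_measure_setOf_lt μ h
    exact hts.trans_le (le_csSup levels_bddAbove ⟨ht.trans hts.le, hs⟩)

theorem schwarzProfile_antitone (hw : Continuous w) (hwc : HasCompactSupport w) :
    Antitone (schwarzProfile μ w) := by
  intro r s hrs
  have nonneg := schwarzProfile_nonneg μ w r
  refine le_of_not_gt fun h => lt_irrefl (schwarzProfile μ w r) ?_
  exact (lt_schwarzProfile_iff μ hw hwc nonneg r).2 <|
    (measure_mono (ball_subset_ball hrs)).trans_lt ((lt_schwarzProfile_iff μ hw hwc nonneg s).1 h)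

end Profile

variable {E : Type*} [NormedAddCommGroup E] [NormedSpace ℝ E] [FiniteDimensional ℝ E]
  [MeasurableSpace E] [BorelSpace E] (μ : Measure E) [μ.IsAddHaarMeasure]

section Balls

variable [Nontrivial E]

theorem measure_ball_zero_strictMonoOn : StrictMonoOn (fun r => μ (ball (0 : E) r)) (Ici 0) := by
  intro r (hr : 0 ≤ r) s (hs : 0 ≤ s) hrs
  have measure_unitBall_pos : 0 < μ (ball (0 : E) 1) := measure_ball_pos μ _ one_pos
  simp only [Measure.addHaar_ball μ 0 hr, Measure.addHaar_ball μ 0 hs]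
  apply ENNReal.mul_lt_mul_left measure_unitBall_pos.ne' measure_ball_lt_top.ne
  rw [ENNReal.ofReal_lt_ofReal_iff (pow_pos (hr.trans_lt hrs) _)]
  exact pow_lt_pow_left₀ hrs hr Module.finrank_pos.ne'

theorem exists_measure_ball_zero_eq {m : ℝ≥0∞} (hm : m ≠ ∞) :
    ∃ r, 0 ≤ r ∧ μ (ball (0 : E) r) = m := by
  have measure_unitBall_pos : 0 < μ (ball (0 : E) 1) := measure_ball_pos μ _ one_pos
  refine ⟨(m / μ (ball (0 : E) 1)).toReal ^ ((Module.finrank ℝ E : ℝ)⁻¹), by positivity, ?_⟩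
  rw [Measure.addHaar_ball μ 0 (by positivity),
    rpow_inv_natCast_pow ENNReal.toReal_nonneg Module.finrank_pos.ne',
    ENNReal.ofReal_toReal (ENNReal.div_ne_top hm measure_unitBall_pos.ne'),
    ENNReal.div_mul_cancel measure_unitBall_pos.ne' measure_ball_lt_top.ne]

theorem measure_setOf_measure_ball_norm_lt {m : ℝ≥0∞} (hm : m ≠ ∞) :
    μ {x : E | μ (ball (0 : E) ‖x‖) < m} = m := by
  obtain ⟨ρ, hρ, rfl⟩ := exists_measure_ball_zero_eq μ hm
  congr 1
  ext x
  simpa using (measure_ball_zero_strictMonoOn μ).lt_iff_lt (norm_nonneg x) hρ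

theorem measure_ball_add_lt_measure_thickening {A : Set E} (hA : MeasurableSet A)
    (hA_top : μ A ≠ ∞) {r h : ℝ} (hh : 0 < h) (hrA : μ (ball (0 : E) r) < μ A) :
    μ (ball 0 (r + h)) < μ (thickening h A) := by
  obtain ⟨ρ, hρ, ball_eq⟩ := exists_measure_ball_zero_eq μ hA_top
  have hrρ : r < ρ := by
    by_contra! hle
    exact hrA.not_ge (ball_eq ▸ measure_mono (ball_subset_ball hle))
  have hρ_pos : 0 < ρ := by
    refine hρ.lt_of_ne fun h0 => ?_
    simp [← ball_eq, ← h0] at hrA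
  refine lt_of_lt_of_le ?_ (measure_ball_add_le_measure_thickening μ hA hρ_pos hh ball_eq.le)
  rcases le_or_gt (r + h) 0 with hrh | hrh
  · rw [ball_eq_empty.2 hrh, measure_empty]
    exact measure_ball_pos μ _ (by positivity)
  · exact measure_ball_zero_strictMonoOn μ hrh.le (by positivity : 0 ≤ ρ + h) (by linarith)

end Balls

variable {w : E → ℝ} {L : ℝ≥0} {t : ℝ}

theorem schwarzProfile_eq_zero [Nontrivial E] (hw : Continuous w) (hwc : HasCompactSupport w)
    {d : ℝ} (hd : ∀ x y, 0 < w x → 0 < w y → dist x y ≤ d) {r : ℝ} (hr : d / 2 ≤ r) :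
    schwarzProfile μ w r = 0 := by
  refine le_antisymm (le_of_not_gt fun h => ?_) (schwarzProfile_nonneg μ w r)
  refine ((lt_schwarzProfile_iff μ hw hwc le_rfl r).1 h).not_ge ?_
  calc μ {x | 0 < w x} ≤ μ (closedBall 0 (d / 2)) :=
        measure_le_measure_closedBall_half μ (isOpen_lt continuous_const hw).measurableSet
          fun x hx y hy => hd x y hx hy
    _ = μ (ball 0 (d / 2)) := Measure.addHaar_closedBall_eq_addHaar_ball μ 0 _
    _ ≤ μ (ball 0 r) := measure_mono (ball_subset_ball hr)

variable [Nontrivial E]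

theorem schwarzProfile_lipschitzWith (hw : LipschitzWith L w) (hwc : HasCompactSupport w) :
    LipschitzWith L (schwarzProfile μ w) := by
  refine LipschitzWith.of_le_add_mul L fun r s => ?_
  rcases le_or_gt s r with hsr | hrs
  · exact (schwarzProfile_antitone μ hw.continuous hwc hsr).trans
      (le_add_of_nonneg_right (by positivity))
  have nonneg := schwarzProfile_nonneg μ w s
  refine le_of_not_gt fun h => lt_irrefl (schwarzProfile μ w s) ?_
  rw [dist_comm, Real.dist_eq, abs_of_pos (sub_pos.2 hrs)] at h
  have level_nonneg : 0 ≤ schwarzProfile μ w s + L * (s - r) :=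
    add_nonneg nonneg (mul_nonneg L.2 (sub_pos.2 hrs).le)
  have measure_ball_lt := measure_ball_add_lt_measure_thickening μ
    (isOpen_lt continuous_const hw.continuous).measurableSet
    (measure_setOf_lt_ne_top μ hwc level_nonneg) (sub_pos.2 hrs)
    ((lt_schwarzProfile_iff μ hw.continuous hwc level_nonneg r).1 h)
  rw [add_sub_cancel] at measure_ball_lt
  exact (lt_schwarzProfile_iff μ hw.continuous hwc nonneg s).2
    (measure_ball_lt.trans_le (measure_mono (thickening_setOf_add_lt_subset hw _ _)))

theorem measure_setOf_lt_schwarzProfile_norm (hw : Continuous w) (hwc : HasCompactSupport w)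
    (ht : 0 ≤ t) : μ {x : E | t < schwarzProfile μ w ‖x‖} = μ {x | t < w x} := by
  simp only [lt_schwarzProfile_iff μ hw hwc ht]
  exact measure_setOf_measure_ball_norm_lt μ (measure_setOf_lt_ne_top μ hwc ht)

theorem schwarzProfile_norm_lipschitzWith (hw : LipschitzWith L w) (hwc : HasCompactSupport w) :
    LipschitzWith L fun x : E => schwarzProfile μ w ‖x‖ :=
  mul_one L ▸ (schwarzProfile_lipschitzWith μ hw hwc).comp lipschitzWith_one_norm

theorem schwarzProfile_norm_hasCompactSupport (hw : Continuous w) (hwc : HasCompactSupport w) :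
    HasCompactSupport fun x : E => schwarzProfile μ w ‖x‖ := by
  have dist_le_diam : ∀ x y, 0 < w x → 0 < w y → dist x y ≤ diam (tsupport w) := fun x y hx hy =>
    dist_le_diam_of_mem hwc.isCompact.isBounded (subset_tsupport _ hx.ne')
      (subset_tsupport _ hy.ne')
  have := FiniteDimensional.proper ℝ E
  exact hasCompactSupport_comp_norm fun r => schwarzProfile_eq_zero μ hw hwc dist_le_diam

theorem integral_schwarzProfile_norm_rpow (hw : LipschitzWith L w) (hwc : HasCompactSupport w)
    (hw0 : ∀ x, 0 ≤ w x) {q : ℝ} (hq : 0 < q) :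
    ∫ x, schwarzProfile μ w ‖x‖ ^ q ∂μ = ∫ x, w x ^ q ∂μ := by
  have setOf_lt_rpow {f : E → ℝ} (hf : ∀ x, 0 ≤ f x) {t : ℝ} (ht : 0 ≤ t) :
      {x | t < f x ^ q} = {x | t ^ q⁻¹ < f x} := by
    ext x
    exact (rpow_inv_lt_iff_of_pos ht (hf x) hq).symm
  have measure_eq (t : ℝ) (ht : 0 ≤ t) :
      μ {x : E | t < schwarzProfile μ w ‖x‖ ^ q} = μ {x | t < w x ^ q} := by
    rw [setOf_lt_rpow (fun x => schwarzProfile_nonneg μ w _) ht, setOf_lt_rpow hw0 ht,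
      measure_setOf_lt_schwarzProfile_norm μ hw.continuous hwc (by positivity)]
  have integrable_profile := integrable_rpow_of_hasCompactSupport μ
    (schwarzProfile_norm_lipschitzWith μ hw hwc).continuous
    (schwarzProfile_norm_hasCompactSupport μ hw.continuous hwc) hq
  have integrable_w := integrable_rpow_of_hasCompactSupport μ hw.continuous hwc hq
  have nonneg (x : E) : 0 ≤ schwarzProfile μ w ‖x‖ ^ q :=
    rpow_nonneg (schwarzProfile_nonneg μ w _) q
  exact le_antisymm
    (integral_le_integral_of_meas_lt_le integrable_profile integrable_w nonneg
      (fun x => rpow_nonneg (hw0 x) q) fun t ht => (measure_eq t ht).le)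
    (integral_le_integral_of_meas_lt_le integrable_w integrable_profile
      (fun x => rpow_nonneg (hw0 x) q) nonneg fun t ht => (measure_eq t ht).ge)

section PolyaSzego

variable {p p' h : ℝ}

theorem measure_ball_norm_lt_of_lt_hopfLax (hp : p.HolderConjugate p') (hh : 0 < h)
    (hw : LipschitzWith L w) (hwc : HasCompactSupport w) (ht : 0 ≤ t) {x : E}
    (hx : t < hopfLax p' (fun y => schwarzProfile μ w ‖y‖) h x) :
    μ (ball (0 : E) ‖x‖) < μ {y | t < hopfLax p' w h y} := by
  obtain ⟨v, hv⟩ := (lt_hopfLax_iff hp hh.le (schwarzProfile_norm_lipschitzWith μ hw hwc)).1 hx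
  have cost_nonneg : 0 ≤ h * (‖v‖ ^ p' / p') := by
    have := hp.symm.pos
    positivity
  have level_nonneg : 0 ≤ t + h * (‖v‖ ^ p' / p') := add_nonneg ht cost_nonneg
  have measure_ball_lt : μ (ball (0 : E) ‖x + h • v‖) < μ {y | t + h * (‖v‖ ^ p' / p') < w y} :=
    (lt_schwarzProfile_iff μ hw.continuous hwc level_nonneg _).1 (by linarith)
  rcases eq_or_ne v 0 with rfl | hv0
  · rw [smul_zero, add_zero] at measure_ball_lt
    refine measure_ball_lt.trans_le (measure_mono fun y hy => ?_)
    have := self_le_hopfLax hp hh.le hw y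
    simp only [mem_ofPred_eq] at hy ⊢
    linarith
  have norm_le : ‖x‖ ≤ ‖x + h • v‖ + h * ‖v‖ := by
    simpa [norm_smul, abs_of_pos hh] using norm_le_add_norm_add x (h • v)
  calc μ (ball 0 ‖x‖) ≤ μ (ball 0 (‖x + h • v‖ + h * ‖v‖)) :=
        measure_mono (ball_subset_ball norm_le)
    _ < μ (thickening (h * ‖v‖) {y | t + h * (‖v‖ ^ p' / p') < w y}) :=
        measure_ball_add_lt_measure_thickening μ
          (isOpen_lt continuous_const hw.continuous).measurableSet
          (measure_setOf_lt_ne_top μ hwc level_nonneg) (mul_pos hh (norm_pos_iff.2 hv0))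
          measure_ball_lt
    _ ≤ μ {y | t < hopfLax p' w h y} :=
        measure_mono (thickening_setOf_lt_subset_setOf_lt_hopfLax hp hh hw t v)

theorem integral_hopfLax_schwarzProfile_norm_le (hp : p.HolderConjugate p') (hh : 0 < h)
    (hh1 : h ≤ 1) (hw : LipschitzWith L w) (hwc : HasCompactSupport w) (hw0 : ∀ x, 0 ≤ w x) :
    ∫ x, hopfLax p' (fun y => schwarzProfile μ w ‖y‖) h x ∂μ ≤ ∫ x, hopfLax p' w h x ∂μ := by
  have hφ := schwarzProfile_norm_lipschitzWith μ hw hwc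
  have hφc := schwarzProfile_norm_hasCompactSupport μ hw.continuous hwc
  refine integral_le_integral_of_meas_lt_le (integrable_hopfLax μ hp hh.le hh1 hφ hφc)
    (integrable_hopfLax μ hp hh.le hh1 hw hwc)
    (fun x => (schwarzProfile_nonneg μ w _).trans (self_le_hopfLax hp hh.le hφ x))
    (fun x => (hw0 x).trans (self_le_hopfLax hp hh.le hw x)) fun t ht => ?_
  rcases eq_or_ne (μ {y | t < hopfLax p' w h y}) ∞ with h_top | h_ne_top
  · exact h_top ▸ le_top
  · exact (measure_mono fun x hx => measure_ball_norm_lt_of_lt_hopfLax μ hp hh hw hwc ht hx).trans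
      (measure_setOf_measure_ball_norm_lt μ h_ne_top).le

theorem integral_norm_fderiv_schwarzProfile_norm_rpow_le (hp : 1 < p) (hw : LipschitzWith L w)
    (hwc : HasCompactSupport w) (hw0 : ∀ x, 0 ≤ w x) :
    ∫ x, ‖fderiv ℝ (fun y => schwarzProfile μ w ‖y‖) x‖ ^ p ∂μ ≤ ∫ x, ‖fderiv ℝ w x‖ ^ p ∂μ := by
  have hpp' := Real.HolderConjugate.conjExponent hp
  have hφ := schwarzProfile_norm_lipschitzWith μ hw hwc
  have hφc := schwarzProfile_norm_hasCompactSupport μ hw.continuous hwc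
  have energy_div_le := le_of_tendsto_of_tendsto (tendsto_integral_hopfLax_sub_div μ hpp' hφ hφc)
    (tendsto_integral_hopfLax_sub_div μ hpp' hw hwc) ?_
  · simp only [integral_div] at energy_div_le
    exact (div_le_div_iff_of_pos_right (by positivity)).1 energy_div_le
  filter_upwards [Ioc_mem_nhdsGT one_pos] with h ⟨hh, hh1⟩
  have integral_profile_eq : ∫ x, schwarzProfile μ w ‖x‖ ∂μ = ∫ x, w x ∂μ := by
    simpa using integral_schwarzProfile_norm_rpow μ hw hwc hw0 one_pos
  rw [integral_div, integral_div, integral_sub (integrable_hopfLax μ hpp' hh.le hh1 hφ hφc)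
    (hφ.continuous.integrable_of_hasCompactSupport hφc), integral_sub
    (integrable_hopfLax μ hpp' hh.le hh1 hw hwc)
    (hw.continuous.integrable_of_hasCompactSupport hwc), integral_profile_eq]
  have := integral_hopfLax_schwarzProfile_norm_le μ hpp' hh hh1 hw hwc hw0
  gcongr

end PolyaSzego

end SchwarzProfile

section Radial

section Gradient

theorem lipschitzWith_comp_norm_sub {E : Type*} [NormedAddCommGroup E] {ψ : ℝ → ℝ} {L : ℝ≥0}
    (hψ : LipschitzWith L ψ) (c : E) : LipschitzWith L fun x => ψ ‖x - c‖ :=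
  mul_one L ▸ hψ.comp (by simpa only [dist_eq_norm] using LipschitzWith.dist_left c)

variable {E : Type*} [NormedAddCommGroup E] [NormedSpace ℝ E] {ψ : ℝ → ℝ} {L : ℝ≥0}

theorem hasDerivAt_of_differentiableAt_comp_norm {x : E} (hx : x ≠ 0)
    (hd : DifferentiableAt ℝ (fun y : E => ψ ‖y‖) x) :
    HasDerivAt ψ (fderiv ℝ (fun y : E => ψ ‖y‖) x (‖x‖⁻¹ • x)) ‖x‖ := by
  have hx_pos : 0 < ‖x‖ := norm_pos_iff.2 hx
  have hd' : HasFDerivAt (fun y : E => ψ ‖y‖) (fderiv ℝ (fun y : E => ψ ‖y‖) x)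
      (‖x‖ • ‖x‖⁻¹ • x) := by
    rw [smul_inv_smul₀ hx_pos.ne']
    exact hd.hasFDerivAt
  have along_ray := hd'.comp_hasDerivAt ‖x‖ ((hasDerivAt_id ‖x‖).smul_const (‖x‖⁻¹ • x))
  rw [one_smul] at along_ray
  refine along_ray.congr_of_eventuallyEq ?_
  filter_upwards [lt_mem_nhds hx_pos] with r hr
  simp [norm_smul, abs_of_pos hr, hx]

theorem norm_fderiv_comp_norm {x : E} (hx : x ≠ 0)
    (hd : DifferentiableAt ℝ (fun y : E => ψ ‖y‖) x) :
    ‖fderiv ℝ (fun y : E => ψ ‖y‖) x‖ = |deriv ψ ‖x‖| := by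
  have hψ := hasDerivAt_of_differentiableAt_comp_norm hx hd
  apply le_antisymm
  · refine le_of_forall_pos_le_add fun ε hε => ?_
    have hεψ : 0 < |deriv ψ ‖x‖| + ε := by positivity
    refine hd.hasFDerivAt.le_of_lip' hεψ.le ?_
    have deriv_bound : ∀ᶠ r in 𝓝 ‖x‖, ‖ψ r - ψ ‖x‖‖ ≤ (|deriv ψ ‖x‖| + ε) * ‖r - ‖x‖‖ := by
      filter_upwards [(hψ.differentiableAt.hasDerivAt.isLittleO).def hε] with r hr
      have := norm_add_le (ψ r - ψ ‖x‖ - (r - ‖x‖) • deriv ψ ‖x‖) ((r - ‖x‖) • deriv ψ ‖x‖)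
      rw [sub_add_cancel, norm_smul, Real.norm_eq_abs (deriv ψ ‖x‖)] at this
      linarith
    filter_upwards [continuous_norm.continuousAt.eventually deriv_bound] with y hy
    exact hy.trans (mul_le_mul_of_nonneg_left (abs_norm_sub_norm_le y x) hεψ.le)
  · rw [hψ.deriv, ← Real.norm_eq_abs]
    refine (ContinuousLinearMap.le_opNorm _ _).trans_eq ?_
    rw [norm_smul, norm_inv, norm_norm, inv_mul_cancel₀ (norm_ne_zero_iff.2 hx), mul_one]

theorem ae_norm_fderiv_comp_norm_sub [FiniteDimensional ℝ E] [Nontrivial E] [MeasurableSpace E]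
    [BorelSpace E] (μ : Measure E) [μ.IsAddHaarMeasure] (hψ : LipschitzWith L ψ) (c : E) :
    ∀ᵐ x ∂μ, ‖fderiv ℝ (fun y => ψ ‖y - c‖) x‖ = |deriv ψ ‖x - c‖| := by
  have ae_ne : ∀ᵐ x ∂μ, x ≠ c := by simp [ae_iff]
  filter_upwards [(lipschitzWith_comp_norm_sub hψ c).ae_differentiableAt, ae_ne] with x hx hxc
  rw [fderiv_comp_sub (f := fun y => ψ ‖y‖)]
  exact norm_fderiv_comp_norm (sub_ne_zero.2 hxc)
    ((differentiableAt_comp_sub (f := fun y => ψ ‖y‖) c).1 hx)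

end Gradient

section Polar

theorem exists_ray_inter_ae_eq_Ioc {E : Type*} [NormedAddCommGroup E] [NormedSpace ℝ E] {S : Set E}
    (hS : StarConvex ℝ 0 S) {R : ℝ} (hR : 0 ≤ R) (hSR : S ⊆ closedBall 0 R) {σ : E} (hσ : ‖σ‖ = 1) :
    ∃ r ∈ Icc 0 R, (Ioi 0 ∩ {s : ℝ | s • σ ∈ S} : Set ℝ) =ᵐ[volume] Ioc 0 r := by
  set A : Set ℝ := Ioi 0 ∩ {s : ℝ | s • σ ∈ S}
  have le_R {s : ℝ} (hs : s ∈ A) : s ≤ R := by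
    simpa [norm_smul, hσ, abs_of_pos hs.1.out] using hSR hs.2
  have A_bddAbove : BddAbove A := ⟨R, fun s hs => le_R hs⟩
  refine ⟨sSup A, ⟨Real.sSup_nonneg fun s hs => hs.1.le, Real.sSup_le (fun s hs => le_R hs) hR⟩, ?_⟩
  have Ioo_subset : Ioo 0 (sSup A) ⊆ A := by
    rintro s ⟨hs_pos, hs_lt⟩
    have A_nonempty : A.Nonempty := by
      by_contra! A_empty
      rw [A_empty, Real.sSup_empty] at hs_lt
      exact hs_pos.not_gt hs_lt
    obtain ⟨t, ⟨ht_pos, htS⟩, hst⟩ := exists_lt_of_lt_csSup A_nonempty hs_lt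
    have ht_pos : 0 < t := ht_pos
    refine ⟨hs_pos, ?_⟩
    have := hS.smul_mem htS (div_pos hs_pos ht_pos).le ((div_le_one ht_pos).2 hst.le)
    rwa [smul_smul, div_mul_cancel₀ _ ht_pos.ne'] at this
  have subset_Ioc : A ⊆ Ioc 0 (sSup A) := fun s hs => ⟨hs.1, le_csSup A_bddAbove hs⟩
  exact subset_Ioc.eventuallyLE.antisymm
    (Ioo_ae_eq_Ioc.symm.le.trans Ioo_subset.eventuallyLE)

variable {E : Type*} [NormedAddCommGroup E] [NormedSpace ℝ E] [FiniteDimensional ℝ E]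
  [Nontrivial E] [MeasurableSpace E] [BorelSpace E] {μ : Measure E} [μ.IsAddHaarMeasure]

theorem integral_eq_integral_sphere_integral_Ioi {F : E → ℝ} (hF : Integrable F μ) :
    ∫ x, F x ∂μ = ∫ σ : sphere (0 : E) 1,
      (∫ r in Ioi (0 : ℝ), r ^ (Module.finrank ℝ E - 1) * F (r • (σ : E))) ∂μ.toSphere := by
  let G : sphere (0 : E) 1 × Ioi (0 : ℝ) → ℝ := fun z => F ((z.2 : ℝ) • (z.1 : E))
  have G_polar (x : ({0}ᶜ : Set E)) : G (homeomorphUnitSphereProd E x) = F x := by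
    simp [G, smul_inv_smul₀ (norm_ne_zero_iff.2 x.2)]
  have polar := μ.measurePreserving_homeomorphUnitSphereProd
  have emb : MeasurableEmbedding (homeomorphUnitSphereProd E) := Homeomorph.measurableEmbedding _
  have G_integrable : Integrable G (μ.toSphere.prod (.volumeIoiPow (Module.finrank ℝ E - 1))) := by
    rw [← polar.integrable_comp_emb emb]
    simp only [Function.comp_def, G_polar]
    exact (integrableOn_iff_comap_subtypeVal (measurableSet_singleton 0).compl).1 hF.integrableOn
  calc ∫ x, F x ∂μ = ∫ x : ({0}ᶜ : Set E), G (homeomorphUnitSphereProd E x) ∂(μ.comap (↑)) := by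
        simp only [G_polar]
        rw [integral_subtype_comap (measurableSet_singleton _).compl F, restrict_compl_singleton]
    _ = ∫ σ, ∫ r, G (σ, r) ∂.volumeIoiPow (Module.finrank ℝ E - 1) ∂μ.toSphere := by
        rw [polar.integral_comp emb, integral_prod _ G_integrable]
    _ = _ := by
        congr 1 with σ
        simp only [Measure.volumeIoiPow, ENNReal.ofReal]
        rw [integral_withDensity_eq_integral_smul (by fun_prop),
          integral_subtype_comap measurableSet_Ioi
            fun r : ℝ => Real.toNNReal (r ^ (Module.finrank ℝ E - 1)) • F (r • (σ : E))]
        refine setIntegral_congr_fun measurableSet_Ioi fun r (hr : 0 < r) => ?_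
        rw [NNReal.smul_def, Real.coe_toNNReal _ (by positivity), smul_eq_mul]

theorem setIntegral_comp_norm_nonneg {S : Set E} (hS : StarConvex ℝ 0 S) (hSm : MeasurableSet S)
    {R : ℝ} (hR : 0 ≤ R) (hSR : S ⊆ closedBall 0 R) {g : ℝ → ℝ}
    (hg : IntegrableOn (fun x => g ‖x‖) S μ)
    (h : ∀ r ∈ Icc 0 R, 0 ≤ ∫ s in 0..r, s ^ (Module.finrank ℝ E - 1) * g s) :
    0 ≤ ∫ x in S, g ‖x‖ ∂μ := by
  rw [← integral_indicator hSm, integral_eq_integral_sphere_integral_Ioi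
    ((integrable_indicator_iff hSm).2 hg)]
  refine integral_nonneg fun σ => ?_
  have hσ : ‖(σ : E)‖ = 1 := norm_eq_of_mem_sphere σ
  obtain ⟨r, hr, ray_ae_eq⟩ := exists_ray_inter_ae_eq_Ioc hS hR hSR hσ
  have ray_measurable : MeasurableSet {s : ℝ | s • (σ : E) ∈ S} :=
    (by fun_prop : Measurable fun s : ℝ => s • (σ : E)) hSm
  have integrand_eq : EqOn
      (fun s => s ^ (Module.finrank ℝ E - 1) * S.indicator (fun x => g ‖x‖) (s • (σ : E)))
      ({s : ℝ | s • (σ : E) ∈ S}.indicator fun s => s ^ (Module.finrank ℝ E - 1) * g s)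
      (Ioi 0) := by
    intro s (hs : 0 < s)
    by_cases hsS : s • (σ : E) ∈ S <;> simp [hsS, norm_smul, hσ, abs_of_pos hs]
  rw [Pi.zero_apply, setIntegral_congr_fun measurableSet_Ioi integrand_eq,
    setIntegral_indicator ray_measurable, setIntegral_congr_set ray_ae_eq,
    ← intervalIntegral.integral_of_le hr.1]
  exact h r hr

theorem setIntegral_comp_norm_sub_nonneg {S : Set E} {c : E} (hS : StarConvex ℝ c S)
    (hSm : MeasurableSet S) {R : ℝ} (hR : 0 ≤ R) (hSR : S ⊆ closedBall c R) {g : ℝ → ℝ}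
    (hg : IntegrableOn (fun x => g ‖x - c‖) S μ)
    (h : ∀ r ∈ Icc 0 R, 0 ≤ ∫ s in 0..r, s ^ (Module.finrank ℝ E - 1) * g s) :
    0 ≤ ∫ x in S, g ‖x - c‖ ∂μ := by
  have translation : MeasurePreserving (fun x : E => x + c) μ μ := measurePreserving_add_right μ c
  have emb : MeasurableEmbedding fun x : E => x + c := measurableEmbedding_addRight c
  have g_translate : (fun x => g ‖x - c‖) ∘ (fun x => x + c) = fun x => g ‖x‖ := by
    ext; simp
  have integral_translate := translation.setIntegral_preimage_emb emb (fun x => g ‖x - c‖) S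
  simp only [add_sub_cancel_right] at integral_translate
  rw [← integral_translate]
  refine setIntegral_comp_norm_nonneg ?_ (emb.measurable hSm) hR (fun x hx => ?_) ?_ h
  · have hS' : StarConvex ℝ (0 + c) S := by rwa [zero_add]
    exact hS'.preimage_add_left
  · simpa using hSR hx
  · rw [← g_translate]
    exact (translation.integrableOn_comp_preimage emb).2 hg

end Polar

end Radial

section Truncation

/-- The density of `m ∫ φ ^ q - ∫ |φ'| ^ p` for a radial profile `φ`. The truncated profile has a
nonnegative deficit on every ball centred at the origin. -/
noncomputable def energyDeficit (p q m : ℝ) (φ : ℝ → ℝ) (s : ℝ) : ℝ :=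
  m * φ s ^ q - |deriv φ s| ^ p

variable {p q m : ℝ} {φ : ℝ → ℝ} {L : ℝ≥0}

theorem energyDeficit_eq_zero (hp : p ≠ 0) (hq : q ≠ 0) (φ_anti : Antitone φ)
    (φ_nonneg : ∀ r, 0 ≤ φ r) {r s : ℝ} (hr : φ r = 0) (hrs : r < s) :
    energyDeficit p q m φ s = 0 := by
  have φ_eq_zero : φ =ᶠ[𝓝 s] fun _ => 0 := by
    filter_upwards [lt_mem_nhds hrs] with t ht
    exact le_antisymm (hr ▸ φ_anti ht.le) (φ_nonneg t)
  rw [energyDeficit, φ_eq_zero.deriv_eq, φ_eq_zero.eq_of_nhds]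
  simp [zero_rpow, hp, hq]

theorem measurable_energyDeficit (hφ : LipschitzWith L φ) : Measurable (energyDeficit p q m φ) :=
  ((hφ.continuous.measurable.pow_const q).const_mul m).sub
    ((measurable_deriv φ).norm.pow_const p)

theorem exists_abs_energyDeficit_le (hp : 0 ≤ p) (hq : 0 ≤ q) (hφ : LipschitzWith L φ) {K : Set ℝ}
    (hK : IsCompact K) : ∃ C, ∀ s ∈ K, |energyDeficit p q m φ s| ≤ C := by
  have pow_continuous : Continuous fun s => m * φ s ^ q :=
    continuous_const.mul (hφ.continuous.rpow_const fun _ => Or.inr hq)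
  obtain ⟨C, hC⟩ := hK.exists_bound_of_continuousOn pow_continuous.continuousOn
  refine ⟨C + L ^ p, fun s hs => (abs_sub _ _).trans (add_le_add (hC s hs) ?_)⟩
  rw [abs_of_nonneg (by positivity)]
  exact rpow_le_rpow (abs_nonneg _) (norm_deriv_le_of_lipschitz hφ) hp

theorem intervalIntegrable_pow_mul_energyDeficit (hp : 0 ≤ p) (hq : 0 ≤ q) (hφ : LipschitzWith L φ)
    (n : ℕ) (a b : ℝ) :
    IntervalIntegrable (fun s => s ^ n * energyDeficit p q m φ s) volume a b := by
  obtain ⟨C, hC⟩ := exists_abs_energyDeficit_le (m := m) hp hq hφ (isCompact_uIcc (a := a) (b := b))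
  have : IntervalIntegrable (energyDeficit p q m φ) volume a b := by
    refine intervalIntegrable_iff.2 (Measure.integrableOn_of_bounded (M := C) (by simp)
      (measurable_energyDeficit hφ).aestronglyMeasurable ?_)
    filter_upwards [ae_restrict_mem measurableSet_uIoc] with s hs
    exact hC s (uIoc_subset_uIcc hs)
  exact this.continuousOn_mul (by fun_prop)

theorem integral_pow_mul_energyDeficit_eq_zero (hp : p ≠ 0) (hq : q ≠ 0) (φ_anti : Antitone φ)
    (φ_nonneg : ∀ r, 0 ≤ φ r) (n : ℕ) {r s : ℝ} (hr : φ r = 0) (hrs : r ≤ s) :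
    ∫ t in r..s, t ^ n * energyDeficit p q m φ t = 0 := by
  rw [intervalIntegral.integral_of_le hrs]
  refine setIntegral_eq_zero_of_forall_eq_zero fun t ht => ?_
  rw [energyDeficit_eq_zero hp hq φ_anti φ_nonneg hr ht.1, mul_zero]

theorem energyDeficit_comp_max_of_lt {r₀ s : ℝ} (h : r₀ < s) :
    energyDeficit p q m (fun r => φ (max r r₀)) s = energyDeficit p q m φ s := by
  have : (fun r => φ (max r r₀)) =ᶠ[𝓝 s] φ := by
    filter_upwards [lt_mem_nhds h] with t ht
    rw [max_eq_left ht.le]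
  rw [energyDeficit, energyDeficit, this.deriv_eq, this.eq_of_nhds]

theorem energyDeficit_comp_max_nonneg (hp : p ≠ 0) (hm : 0 ≤ m) (φ_nonneg : ∀ r, 0 ≤ φ r)
    {r₀ s : ℝ} (h : s < r₀) : 0 ≤ energyDeficit p q m (fun r => φ (max r r₀)) s := by
  have : (fun r => φ (max r r₀)) =ᶠ[𝓝 s] fun _ => φ r₀ := by
    filter_upwards [gt_mem_nhds h] with t ht
    rw [max_eq_right ht.le]
  rw [energyDeficit, this.deriv_eq, deriv_const, abs_zero, zero_rpow hp, sub_zero]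
  exact mul_nonneg hm (rpow_nonneg (φ_nonneg _) _)

theorem integral_energyDeficit_comp_max_nonneg (hp : p ≠ 0) (hm : 0 ≤ m)
    (φ_nonneg : ∀ r, 0 ≤ φ r) (n : ℕ) {r₀ r : ℝ} (hr : 0 ≤ r) (hrr₀ : r ≤ r₀) :
    0 ≤ ∫ s in 0..r, s ^ n * energyDeficit p q m (fun r => φ (max r r₀)) s := by
  rw [intervalIntegral.integral_of_le hr, integral_Ioc_eq_integral_Ioo]
  exact setIntegral_nonneg measurableSet_Ioo fun s hs => mul_nonneg (pow_nonneg hs.1.le n)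
    (energyDeficit_comp_max_nonneg hp hm φ_nonneg (hs.2.trans_le hrr₀))

theorem integral_energyDeficit_comp_max_eq (n : ℕ) {r₀ r : ℝ} (h : r₀ ≤ r) :
    ∫ s in r₀..r, s ^ n * energyDeficit p q m (fun r => φ (max r r₀)) s =
      ∫ s in r₀..r, s ^ n * energyDeficit p q m φ s := by
  simp only [intervalIntegral.integral_of_le h]
  refine setIntegral_congr_fun measurableSet_Ioc fun s hs => ?_
  rw [energyDeficit_comp_max_of_lt hs.1]

theorem exists_truncation_integral_energyDeficit_nonneg (hp : 0 < p) (hq : 0 < q) (hm : 0 ≤ m)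
    (hφ : LipschitzWith L φ) (φ_anti : Antitone φ) (φ_nonneg : ∀ r, 0 ≤ φ r) {n : ℕ} {R : ℝ}
    (hR : 0 ≤ R) (h : 0 < ∫ s in 0..R, s ^ n * energyDeficit p q m φ s) :
    ∃ r₀, 0 ≤ r₀ ∧ 0 < φ r₀ ∧ ∀ r ∈ Icc 0 R,
      0 ≤ ∫ s in 0..r, s ^ n * energyDeficit p q m (fun r => φ (max r r₀)) s := by
  set g := fun s => s ^ n * energyDeficit p q m φ s
  have g_integrable := intervalIntegrable_pow_mul_energyDeficit (m := m) hp.le hq.le hφ n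
  obtain ⟨r₀, hr₀, hr₀_min⟩ := isCompact_Icc.exists_isMinOn (nonempty_Icc.2 hR)
    (intervalIntegral.continuous_primitive g_integrable 0).continuousOn
  have min_le {r : ℝ} (hr : r ∈ Icc 0 R) : ∫ s in 0..r₀, g s ≤ ∫ s in 0..r, g s := hr₀_min hr
  refine ⟨r₀, hr₀.1, (φ_nonneg r₀).lt_of_ne fun φ_zero => ?_, fun r hr => ?_⟩
  · have tail := integral_pow_mul_energyDeficit_eq_zero (m := m) hp.ne' hq.ne' φ_anti φ_nonneg n
      φ_zero.symm hr₀.2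
    rw [← intervalIntegral.integral_add_adjacent_intervals (g_integrable 0 r₀) (g_integrable r₀ R),
      tail, add_zero] at h
    exact h.not_ge (by simpa using min_le (left_mem_Icc.2 hR))
  rcases le_total r r₀ with hrr₀ | hrr₀
  · exact integral_energyDeficit_comp_max_nonneg hp.ne' hm φ_nonneg n hr.1 hrr₀
  have hψ : LipschitzWith L fun r => φ (max r r₀) := by
    simpa [Function.comp_def] using hφ.comp (LipschitzWith.id.max_const r₀)
  have ψ_integrable := intervalIntegrable_pow_mul_energyDeficit (m := m) hp.le hq.le hψ n
  rw [← intervalIntegral.integral_add_adjacent_intervals (ψ_integrable 0 r₀) (ψ_integrable r₀ r),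
    integral_energyDeficit_comp_max_eq n hrr₀]
  refine add_nonneg
    (integral_energyDeficit_comp_max_nonneg hp.ne' hm φ_nonneg n hr₀.1 le_rfl) ?_
  have := min_le hr
  rw [← intervalIntegral.integral_add_adjacent_intervals (g_integrable 0 r₀)
    (g_integrable r₀ r)] at this
  linarith

end Truncation

section Lipschitz

variable {E : Type*} [NormedAddCommGroup E] [NormedSpace ℝ E] [MeasurableSpace E]
  [BorelSpace E] {μ : Measure E} {f : E → ℝ} {L : ℝ≥0} {p : ℝ}

theorem integrableOn_norm_fderiv_rpow (hf : LipschitzWith L f) (hp : 0 ≤ p) {S : Set E}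
    (hS : μ S ≠ ∞) : IntegrableOn (fun x => ‖fderiv ℝ f x‖ ^ p) S μ := by
  refine Measure.integrableOn_of_bounded (M := L ^ p) hS
    ((measurable_fderiv ℝ f).norm.pow_const p).aestronglyMeasurable (ae_of_all _ fun x => ?_)
  rw [norm_of_nonneg (by positivity)]
  exact rpow_le_rpow (norm_nonneg _) (norm_fderiv_le_of_lipschitz ℝ hf) hp

theorem integrable_norm_fderiv_rpow [IsFiniteMeasureOnCompacts μ] (hf : LipschitzWith L f)
    (hfc : HasCompactSupport f) (hp : 0 < p) : Integrable (fun x => ‖fderiv ℝ f x‖ ^ p) μ := by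
  refine (integrableOn_iff_integrable_of_support_subset fun x hx => ?_).1
    (integrableOn_norm_fderiv_rpow hf hp.le hfc.isCompact.measure_lt_top.ne)
  refine support_fderiv_subset ℝ fun h => hx ?_
  simp [h, zero_rpow hp.ne']

end Lipschitz

section RadialProfile

variable {E : Type*} [NormedAddCommGroup E] [NormedSpace ℝ E] [FiniteDimensional ℝ E]
  [Nontrivial E] [MeasurableSpace E] [BorelSpace E] (μ : Measure E) [μ.IsAddHaarMeasure]
  {p q m : ℝ} {ψ : ℝ → ℝ} {L : ℝ≥0}

theorem energyDeficit_norm_sub_ae_eq (hψ : LipschitzWith L ψ) (c : E) :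
    (fun x => energyDeficit p q m ψ ‖x - c‖) =ᵐ[μ] fun x =>
      m * ψ ‖x - c‖ ^ q - ‖fderiv ℝ (fun y => ψ ‖y - c‖) x‖ ^ p := by
  filter_upwards [ae_norm_fderiv_comp_norm_sub μ hψ c] with x hx
  rw [hx, energyDeficit]

theorem integral_energyDeficit_norm_sub {ν : Measure E} (hν : ν ≪ μ) (hψ : LipschitzWith L ψ)
    (c : E) (hψ_int : Integrable (fun x => ψ ‖x - c‖ ^ q) ν)
    (hψ_energy : Integrable (fun x => ‖fderiv ℝ (fun y => ψ ‖y - c‖) x‖ ^ p) ν) :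
    ∫ x, energyDeficit p q m ψ ‖x - c‖ ∂ν =
      m * (∫ x, ψ ‖x - c‖ ^ q ∂ν) - ∫ x, ‖fderiv ℝ (fun y => ψ ‖y - c‖) x‖ ^ p ∂ν := by
  rw [← integral_const_mul, ← integral_sub (hψ_int.const_mul m) hψ_energy]
  exact integral_congr_ae (hν.ae_eq (energyDeficit_norm_sub_ae_eq μ hψ c))

theorem integral_energyDeficit_norm (hp : p ≠ 0) (hq : q ≠ 0) (ψ_anti : Antitone ψ)
    (ψ_nonneg : ∀ r, 0 ≤ ψ r) {R : ℝ} (hR : 0 ≤ R) (hψR : ψ R = 0) :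
    ∫ x, energyDeficit p q m ψ ‖x‖ ∂μ = Module.finrank ℝ E * (μ.real (ball 0 1) *
      ∫ s in 0..R, s ^ (Module.finrank ℝ E - 1) * energyDeficit p q m ψ s) := by
  rw [integral_fun_norm_addHaar μ, nsmul_eq_mul, smul_eq_mul,
    intervalIntegral.integral_of_le hR]
  simp only [smul_eq_mul]
  congr 2
  refine setIntegral_eq_of_subset_of_forall_sdiff_eq_zero measurableSet_Ioi Ioc_subset_Ioi_self
    fun s hs => ?_
  have hRs : R < s := not_le.1 fun h => hs.2 ⟨hs.1, h⟩
  rw [energyDeficit_eq_zero hp hq ψ_anti ψ_nonneg hψR hRs, mul_zero]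

theorem integral_energyDeficit_schwarzProfile_pos {w : E → ℝ} (hp : 1 < p) (hq : 0 < q)
    (hw : LipschitzWith L w) (hwc : HasCompactSupport w) (hw0 : ∀ x, 0 ≤ w x) {d : ℝ}
    (hd0 : 0 ≤ d) (hd : ∀ x y, 0 < w x → 0 < w y → dist x y ≤ d)
    (energy_lt : ∫ x, ‖fderiv ℝ w x‖ ^ p ∂μ < m * ∫ x, w x ^ q ∂μ) :
    0 < ∫ s in 0..d, s ^ (Module.finrank ℝ E - 1) * energyDeficit p q m (schwarzProfile μ w) s := by
  set φ := schwarzProfile μ w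
  have φ_lip : LipschitzWith L φ := schwarzProfile_lipschitzWith μ hw hwc
  have φ_norm_lip := schwarzProfile_norm_lipschitzWith μ hw hwc
  have φ_norm_supp := schwarzProfile_norm_hasCompactSupport μ hw.continuous hwc
  have mass_integrable :=
    integrable_rpow_of_hasCompactSupport μ φ_norm_lip.continuous φ_norm_supp hq
  have energy_integrable :=
    integrable_norm_fderiv_rpow (μ := μ) φ_norm_lip φ_norm_supp (zero_lt_one.trans hp)
  have deficit_eq : ∫ x, energyDeficit p q m φ ‖x‖ ∂μ =
      m * (∫ x, φ ‖x‖ ^ q ∂μ) - ∫ x, ‖fderiv ℝ (fun y => φ ‖y‖) x‖ ^ p ∂μ := by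
    simpa only [sub_zero] using integral_energyDeficit_norm_sub μ (m := m)
      Measure.AbsolutelyContinuous.rfl φ_lip 0 (by simpa using mass_integrable)
      (by simpa using energy_integrable)
  have φ_d : φ d = 0 := schwarzProfile_eq_zero μ hw.continuous hwc hd (by linarith)
  rw [integral_energyDeficit_norm μ (zero_lt_one.trans hp).ne' hq.ne'
    (schwarzProfile_antitone μ hw.continuous hwc) (schwarzProfile_nonneg μ w) hd0 φ_d,
    integral_schwarzProfile_norm_rpow μ hw hwc hw0 hq] at deficit_eq
  have polya_szego := integral_norm_fderiv_schwarzProfile_norm_rpow_le μ hp hw hwc hw0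
  have product_pos := (sub_pos.2 (polya_szego.trans_lt energy_lt)).trans_eq deficit_eq.symm
  exact pos_of_mul_pos_right (pos_of_mul_pos_right product_pos (by positivity)) (by positivity)

theorem exists_radial_profile {w : E → ℝ} (hp : 1 < p) (hq : 0 < q) (hm : 0 ≤ m)
    (hw : LipschitzWith L w) (hwc : HasCompactSupport w) (hw0 : ∀ x, 0 ≤ w x) {d : ℝ}
    (hd0 : 0 ≤ d) (hd : ∀ x y, 0 < w x → 0 < w y → dist x y ≤ d)
    (energy_lt : ∫ x, ‖fderiv ℝ w x‖ ^ p ∂μ < m * ∫ x, w x ^ q ∂μ) :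
    ∃ ψ : ℝ → ℝ, LipschitzWith L ψ ∧ (∀ r, 0 ≤ ψ r) ∧ (∀ r, d / 2 ≤ r → ψ r = 0) ∧ 0 < ψ 0 ∧
      ∫ x, ψ ‖x‖ ^ q ∂μ ≤ ∫ x, w x ^ q ∂μ ∧
      ∀ r ∈ Icc 0 d,
        0 ≤ ∫ s in 0..r, s ^ (Module.finrank ℝ E - 1) * energyDeficit p q m ψ s := by
  have φ_lip := schwarzProfile_lipschitzWith μ hw hwc
  have φ_anti := schwarzProfile_antitone μ hw.continuous hwc
  have φ_nonneg := schwarzProfile_nonneg μ w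
  obtain ⟨r₀, hr₀, hφr₀, deficit_nonneg⟩ := exists_truncation_integral_energyDeficit_nonneg
    (zero_lt_one.trans hp) hq hm φ_lip φ_anti φ_nonneg hd0
    (integral_energyDeficit_schwarzProfile_pos μ hp hq hw hwc hw0 hd0 hd energy_lt)
  refine ⟨fun r => schwarzProfile μ w (max r r₀), ?_, fun r => φ_nonneg _, fun r hr =>
    schwarzProfile_eq_zero μ hw.continuous hwc hd (hr.trans (le_max_left _ _)), ?_, ?_,
    deficit_nonneg⟩
  · simpa [Function.comp_def] using φ_lip.comp (LipschitzWith.id.max_const r₀)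
  · simpa [hr₀] using hφr₀
  · rw [← integral_schwarzProfile_norm_rpow μ hw hwc hw0 hq]
    refine integral_mono_of_nonneg (ae_of_all _ fun x => rpow_nonneg (φ_nonneg _) q)
      (integrable_rpow_of_hasCompactSupport μ
        (schwarzProfile_norm_lipschitzWith μ hw hwc).continuous
        (schwarzProfile_norm_hasCompactSupport μ hw.continuous hwc) hq)
      (ae_of_all _ fun x => ?_)
    exact rpow_le_rpow (φ_nonneg _) (φ_anti (le_max_left _ _)) hq.le

end RadialProfile

section Neumann

theorem abs_rpow_sub_two_mul_self {q s : ℝ} (hq : 1 < q) (hs : 0 ≤ s) :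
    |s| ^ (q - 2) * s = s ^ (q - 1) := by
  rcases hs.eq_or_lt with rfl | hs
  · simp [zero_rpow (sub_pos.2 hq).ne']
  · rw [abs_of_pos hs, ← rpow_add_one hs.ne']
    ring_nf

variable {N : ℕ} {Ω : Set (EuclideanSpace ℝ (Fin N))} {p q : ℝ}

theorem rayleighQuot_nonneg (p q : ℝ) (Ω : Set (EuclideanSpace ℝ (Fin N)))
    (v : EuclideanSpace ℝ (Fin N) → ℝ) : 0 ≤ rayleighQuot p q Ω v :=
  div_nonneg (integral_nonneg fun _ => by positivity)
    (rpow_nonneg (integral_nonneg fun _ => by positivity) _)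

theorem muPQ_le_rayleighQuot {v : EuclideanSpace ℝ (Fin N) → ℝ} {K : ℝ≥0}
    (hv : LipschitzOnWith K v (closure Ω)) (hne : ∃ x ∈ Ω, v x ≠ 0)
    (hmean : ∫ x in Ω, |v x| ^ (q - 2) * v x = 0) : muPQ p q Ω ≤ rayleighQuot p q Ω v :=
  csInf_le ⟨0, by rintro _ ⟨v, -, -, -, -, rfl⟩; exact rayleighQuot_nonneg p q Ω v⟩
    ⟨v, K, hv, hne, hmean, rfl⟩

end Neumann

theorem setIntegral_comp_sub_add_setIntegral_comp_sub_le {G : Type*} [AddGroup G]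
    [MeasurableSpace G] [MeasurableAdd G] {μ : Measure G} [μ.IsAddRightInvariant] {f : G → ℝ}
    (hf : Integrable f μ) (hf0 : ∀ x, 0 ≤ f x) {Ω : Set G} (hΩ : MeasurableSet Ω) {x₀ x₁ : G}
    (hdisj : Disjoint ((· + x₀) ⁻¹' Ω) ((· + x₁) ⁻¹' Ω)) :
    ∫ x in Ω, f (x - x₀) ∂μ + ∫ x in Ω, f (x - x₁) ∂μ ≤ ∫ x, f x ∂μ := by
  have translate (c : G) : ∫ x in Ω, f (x - c) ∂μ = ∫ x in (· + c) ⁻¹' Ω, f x ∂μ := by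
    simpa using ((measurePreserving_add_right μ c).setIntegral_preimage_emb
      (measurableEmbedding_addRight c) (fun x => f (x - c)) Ω).symm
  rw [translate, translate, ← setIntegral_union hdisj (measurable_add_const x₁ hΩ)
    hf.integrableOn hf.integrableOn]
  exact setIntegral_le_integral hf (ae_of_all _ hf0)

section BoundedOpen

variable {E : Type*} [NormedAddCommGroup E] [NormedSpace ℝ E] [FiniteDimensional ℝ E]
  [MeasurableSpace E] [BorelSpace E] (μ : Measure E) [μ.IsAddHaarMeasure] {Ω : Set E} {f : E → ℝ}

theorem integrableOn_of_continuous_of_isBounded (hf : Continuous f) (hΩ : Bornology.IsBounded Ω) :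
    IntegrableOn f Ω μ :=
  have := FiniteDimensional.proper ℝ E
  (hf.continuousOn.integrableOn_compact hΩ.isCompact_closure).mono_set subset_closure

theorem setIntegral_pos_of_continuous (hf : Continuous f) (hf0 : ∀ x, 0 ≤ f x) (hΩo : IsOpen Ω)
    (hΩ : Bornology.IsBounded Ω) (hpos : ∃ x ∈ Ω, 0 < f x) : 0 < ∫ x in Ω, f x ∂μ := by
  rw [setIntegral_pos_iff_support_of_nonneg_ae (ae_of_all _ hf0)
    (integrableOn_of_continuous_of_isBounded μ hf hΩ)]
  obtain ⟨x, hx, hfx⟩ := hpos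
  exact (hf.isOpen_support.inter hΩo).measure_pos μ ⟨x, hfx.ne', hx⟩

theorem setIntegral_rpow_pos {s : ℝ} (hs : 0 < s) (hf : Continuous f) (hf0 : ∀ x, 0 ≤ f x)
    (hΩo : IsOpen Ω) (hΩ : Bornology.IsBounded Ω) (hpos : ∃ x ∈ Ω, 0 < f x) :
    0 < ∫ x in Ω, f x ^ s ∂μ :=
  setIntegral_pos_of_continuous μ (hf.rpow_const fun _ => .inr hs.le)
    (fun x => rpow_nonneg (hf0 x) s) hΩo hΩ (hpos.imp fun _ hx => ⟨hx.1, rpow_pos_of_pos hx.2 s⟩)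

theorem exists_dist_eq_diam {X : Type*} [MetricSpace X] [ProperSpace X] {S : Set X}
    (hS : Bornology.IsBounded S) (hne : S.Nonempty) :
    ∃ x ∈ closure S, ∃ y ∈ closure S, dist x y = diam S := by
  have hK := hS.isCompact_closure
  obtain ⟨⟨x, y⟩, hxy, h_max⟩ := (hK.prod hK).exists_isMaxOn (hne.closure.prod hne.closure)
    (f := fun z => dist z.1 z.2) continuous_dist.continuousOn
  refine ⟨x, hxy.1, y, hxy.2, le_antisymm ?_ ?_⟩
  · exact diam_closure S ▸ dist_le_diam_of_mem hK.isBounded hxy.1 hxy.2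
  · exact diam_le_of_forall_dist_le dist_nonneg fun a ha b hb =>
      h_max (mk_mem_prod (subset_closure ha) (subset_closure hb))

theorem dist_lt_diam_of_isOpen {E : Type*} [NormedAddCommGroup E] [NormedSpace ℝ E] {Ω : Set E}
    (hΩo : IsOpen Ω) (hΩ : Bornology.IsBounded Ω) {x y : E} (hx : x ∈ Ω) (hy : y ∈ Ω)
    (hxy : x ≠ y) : dist x y < diam Ω := by
  have tendsto_y : Filter.Tendsto (fun t : ℝ => AffineMap.lineMap x y t) (𝓝[>] 1) (𝓝 y) := by
    have := ((AffineMap.lineMap_continuous (p := x) (q := y)).continuousWithinAt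
      (s := Ioi (1 : ℝ)) (x := 1)).tendsto
    rwa [AffineMap.lineMap_apply_one] at this
  obtain ⟨t, ht, ht1⟩ := ((tendsto_y.eventually (hΩo.mem_nhds hy)).and self_mem_nhdsWithin).exists
  have ht1 : 1 < t := ht1
  calc dist x y < t * dist x y := lt_mul_left (dist_pos.2 hxy) ht1
    _ = dist x (AffineMap.lineMap x y t) := by
        rw [dist_left_lineMap, norm_of_nonneg (by linarith)]
    _ ≤ diam Ω := dist_le_diam_of_mem hΩ hx ht

end BoundedOpen

section TwoBumps

theorem apply_sub_of_eq_zero_or_eq_zero {V : Type*} [AddGroup V] {G : V → ℝ} (hG : G 0 = 0)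
    {u v : V} (h : u = 0 ∨ v = 0) : G (u - v) = G u + G (-v) := by
  rcases h with rfl | rfl <;> simp [hG]

theorem rpow_mul_add_rpow_mul_le {a b M₀ M₁ t : ℝ} (hM₀ : 0 < M₀) (hM₁ : 0 < M₁)
    (hM : M₀ + M₁ ≤ 1) (ha : 0 ≤ a) (hb : 0 ≤ b) (ht : 0 < t) (ht1 : t ≤ 1) :
    a ^ t * M₀ + b ^ t * M₁ ≤ (a * M₀ + b * M₁) ^ t := by
  set T := M₀ + M₁ with hT
  have hT0 : 0 < T := by positivity
  have concave : M₀ / T * a ^ t + M₁ / T * b ^ t ≤ (M₀ / T * a + M₁ / T * b) ^ t :=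
    (concaveOn_rpow ht.le ht1).2 (mem_Ici.2 ha) (mem_Ici.2 hb) (by positivity) (by positivity)
      (by rw [← add_div, ← hT, div_self hT0.ne'])
  calc a ^ t * M₀ + b ^ t * M₁ = T * (M₀ / T * a ^ t + M₁ / T * b ^ t) := by field_simp
    _ ≤ T ^ t * (M₀ / T * a + M₁ / T * b) ^ t := by
        gcongr
        simpa using rpow_le_rpow_of_exponent_ge hT0 hM ht1
    _ = (a * M₀ + b * M₁) ^ t := by
        rw [← mul_rpow hT0.le (by positivity)]
        congr 1
        field_simp

theorem fderiv_eq_zero_of_nonneg_of_eq_zero {E : Type*} [NormedAddCommGroup E] [NormedSpace ℝ E]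
    {f : E → ℝ} (hf0 : ∀ x, 0 ≤ f x) {x : E} (hx : f x = 0) : fderiv ℝ f x = 0 :=
  IsLocalMin.fderiv_eq_zero (Filter.Eventually.of_forall fun y => hx ▸ hf0 y)

variable {E : Type*} [NormedAddCommGroup E] [NormedSpace ℝ E] [FiniteDimensional ℝ E]
  [MeasurableSpace E] [BorelSpace E] {μ : Measure E} [μ.IsAddHaarMeasure] {Ω : Set E}
  {f₀ f₁ : E → ℝ} {L₀ L₁ : ℝ≥0} {p q a b : ℝ}

theorem setIntegral_abs_sub_rpow (hΩ : Bornology.IsBounded Ω) (hf₀ : Continuous f₀)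
    (hf₁ : Continuous f₁) (hf₀0 : ∀ x, 0 ≤ f₀ x) (hf₁0 : ∀ x, 0 ≤ f₁ x)
    (hdisj : ∀ x, f₀ x = 0 ∨ f₁ x = 0) (hq : 0 < q) (ha : 0 ≤ a) (hb : 0 ≤ b) :
    ∫ x in Ω, |a * f₀ x - b * f₁ x| ^ q ∂μ =
      a ^ q * ∫ x in Ω, f₀ x ^ q ∂μ + b ^ q * ∫ x in Ω, f₁ x ^ q ∂μ := by
  have integrableOn_rpow {f : E → ℝ} (hf : Continuous f) : IntegrableOn (fun x => f x ^ q) Ω μ :=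
    integrableOn_of_continuous_of_isBounded μ (hf.rpow_const fun _ => .inr hq.le) hΩ
  rw [← integral_const_mul, ← integral_const_mul, ← integral_add
    ((integrableOn_rpow hf₀).const_mul _) ((integrableOn_rpow hf₁).const_mul _)]
  congr with x
  rw [apply_sub_of_eq_zero_or_eq_zero (G := fun s => |s| ^ q) (by simp [hq.ne'])
    ((hdisj x).imp (by simp +contextual) (by simp +contextual)), abs_neg,
    abs_of_nonneg (mul_nonneg ha (hf₀0 x)), abs_of_nonneg (mul_nonneg hb (hf₁0 x)),
    mul_rpow ha (hf₀0 x), mul_rpow hb (hf₁0 x)]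

theorem setIntegral_abs_sub_rpow_mul_sub (hΩ : Bornology.IsBounded Ω) (hf₀ : Continuous f₀)
    (hf₁ : Continuous f₁) (hf₀0 : ∀ x, 0 ≤ f₀ x) (hf₁0 : ∀ x, 0 ≤ f₁ x)
    (hdisj : ∀ x, f₀ x = 0 ∨ f₁ x = 0) (hq : 1 < q) (ha : 0 ≤ a) (hb : 0 ≤ b) :
    ∫ x in Ω, |a * f₀ x - b * f₁ x| ^ (q - 2) * (a * f₀ x - b * f₁ x) ∂μ =
      a ^ (q - 1) * ∫ x in Ω, f₀ x ^ (q - 1) ∂μ - b ^ (q - 1) * ∫ x in Ω, f₁ x ^ (q - 1) ∂μ := by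
  have integrableOn_rpow {f : E → ℝ} (hf : Continuous f) :
      IntegrableOn (fun x => f x ^ (q - 1)) Ω μ :=
    integrableOn_of_continuous_of_isBounded μ
      (hf.rpow_const fun _ => .inr (sub_pos.2 hq).le) hΩ
  rw [← integral_const_mul, ← integral_const_mul, ← integral_sub
    ((integrableOn_rpow hf₀).const_mul _) ((integrableOn_rpow hf₁).const_mul _)]
  congr with x
  rw [apply_sub_of_eq_zero_or_eq_zero (G := fun s => |s| ^ (q - 2) * s) (by simp)
    ((hdisj x).imp (by simp +contextual) (by simp +contextual)), abs_neg, mul_neg,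
    abs_rpow_sub_two_mul_self hq (mul_nonneg ha (hf₀0 x)),
    abs_rpow_sub_two_mul_self hq (mul_nonneg hb (hf₁0 x)),
    mul_rpow ha (hf₀0 x), mul_rpow hb (hf₁0 x), ← sub_eq_add_neg]

theorem setIntegral_norm_fderiv_sub_rpow (hΩ : Bornology.IsBounded Ω) (hf₀ : LipschitzWith L₀ f₀)
    (hf₁ : LipschitzWith L₁ f₁) (hf₀0 : ∀ x, 0 ≤ f₀ x) (hf₁0 : ∀ x, 0 ≤ f₁ x)
    (hdisj : ∀ x, f₀ x = 0 ∨ f₁ x = 0) (hp : 0 < p) (ha : 0 ≤ a) (hb : 0 ≤ b) :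
    ∫ x in Ω, ‖fderiv ℝ (fun x => a * f₀ x - b * f₁ x) x‖ ^ p ∂μ =
      a ^ p * ∫ x in Ω, ‖fderiv ℝ f₀ x‖ ^ p ∂μ + b ^ p * ∫ x in Ω, ‖fderiv ℝ f₁ x‖ ^ p ∂μ := by
  have := FiniteDimensional.proper ℝ E
  have hΩ_top : μ Ω ≠ ∞ := hΩ.measure_lt_top.ne
  rw [← integral_const_mul, ← integral_const_mul, ← integral_add
    ((integrableOn_norm_fderiv_rpow hf₀ hp.le hΩ_top).const_mul _)
    ((integrableOn_norm_fderiv_rpow hf₁ hp.le hΩ_top).const_mul _)]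
  refine integral_congr_ae (ae_restrict_of_ae ?_)
  filter_upwards [hf₀.ae_differentiableAt, hf₁.ae_differentiableAt] with x hx₀ hx₁
  rw [fderiv_fun_sub (hx₀.const_mul a) (hx₁.const_mul b), fderiv_const_mul hx₀,
    fderiv_const_mul hx₁,
    apply_sub_of_eq_zero_or_eq_zero (G := fun D => ‖D‖ ^ p) (by simp [hp.ne'])
    ((hdisj x).imp (fun h => by rw [fderiv_eq_zero_of_nonneg_of_eq_zero hf₀0 h, smul_zero])
      fun h => by rw [fderiv_eq_zero_of_nonneg_of_eq_zero hf₁0 h, smul_zero]),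
    norm_neg, norm_smul, norm_smul, norm_of_nonneg ha, norm_of_nonneg hb,
    mul_rpow ha (norm_nonneg _), mul_rpow hb (norm_nonneg _)]

theorem muPQ_le_of_disjoint_bumps {N : ℕ} {Ω : Set (EuclideanSpace ℝ (Fin N))}
    {f₀ f₁ : EuclideanSpace ℝ (Fin N) → ℝ} {m : ℝ} (hp : 0 < p) (hpq : p ≤ q) (hq : 1 < q)
    (hm : 0 ≤ m) (hΩo : IsOpen Ω) (hΩ : Bornology.IsBounded Ω) (hf₀ : LipschitzWith L₀ f₀)
    (hf₁ : LipschitzWith L₁ f₁) (hf₀0 : ∀ x, 0 ≤ f₀ x) (hf₁0 : ∀ x, 0 ≤ f₁ x)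
    (hdisj : ∀ x, f₀ x = 0 ∨ f₁ x = 0) (pos₀ : ∃ x ∈ Ω, 0 < f₀ x) (pos₁ : ∃ x ∈ Ω, 0 < f₁ x)
    (mass : (∫ x in Ω, f₀ x ^ q) + ∫ x in Ω, f₁ x ^ q ≤ 1)
    (energy₀ : ∫ x in Ω, ‖fderiv ℝ f₀ x‖ ^ p ≤ m * ∫ x in Ω, f₀ x ^ q)
    (energy₁ : ∫ x in Ω, ‖fderiv ℝ f₁ x‖ ^ p ≤ m * ∫ x in Ω, f₁ x ^ q) :
    muPQ p q Ω ≤ m := by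
  have hq0 : 0 < q := by linarith
  have hM₀ := setIntegral_rpow_pos volume hq0 hf₀.continuous hf₀0 hΩo hΩ pos₀
  have hM₁ := setIntegral_rpow_pos volume hq0 hf₁.continuous hf₁0 hΩo hΩ pos₁
  have hI₀ := setIntegral_rpow_pos volume (sub_pos.2 hq) hf₀.continuous hf₀0 hΩo hΩ pos₀
  have hI₁ := setIntegral_rpow_pos volume (sub_pos.2 hq) hf₁.continuous hf₁0 hΩo hΩ pos₁
  set a := (∫ x in Ω, f₁ x ^ (q - 1)) ^ (q - 1)⁻¹
  set b := (∫ x in Ω, f₀ x ^ (q - 1)) ^ (q - 1)⁻¹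
  have ha : 0 < a := rpow_pos_of_pos hI₁ _
  have hb : 0 < b := rpow_pos_of_pos hI₀ _
  have mean_zero : ∫ x in Ω, |a * f₀ x - b * f₁ x| ^ (q - 2) * (a * f₀ x - b * f₁ x) = 0 := by
    rw [setIntegral_abs_sub_rpow_mul_sub hΩ hf₀.continuous hf₁.continuous hf₀0 hf₁0 hdisj hq ha.le
      hb.le, rpow_inv_rpow hI₁.le (sub_pos.2 hq).ne', rpow_inv_rpow hI₀.le (sub_pos.2 hq).ne']
    ring
  have hne : ∃ x ∈ Ω, a * f₀ x - b * f₁ x ≠ 0 := by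
    obtain ⟨x, hx, hfx⟩ := pos₀
    refine ⟨x, hx, ?_⟩
    rw [(hdisj x).resolve_left hfx.ne', mul_zero, sub_zero]
    positivity
  have lip : LipschitzWith (‖a‖₊ * L₀ + ‖b‖₊ * L₁) fun x => a * f₀ x - b * f₁ x :=
    ((lipschitzWith_smul a).comp hf₀).sub ((lipschitzWith_smul b).comp hf₁)
  refine (muPQ_le_rayleighQuot (lip.lipschitzOnWith (s := closure Ω)) hne mean_zero).trans ?_
  have hölder := rpow_mul_add_rpow_mul_le hM₀ hM₁ mass (rpow_nonneg ha.le q)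
    (rpow_nonneg hb.le q) (div_pos hp hq0) ((div_le_one hq0).2 hpq)
  rw [← rpow_mul ha.le, ← rpow_mul hb.le, mul_div_cancel₀ _ hq0.ne'] at hölder
  refine div_le_of_le_mul₀ (by positivity) hm ?_
  rw [setIntegral_norm_fderiv_sub_rpow hΩ hf₀ hf₁ hf₀0 hf₁0 hdisj hp ha.le hb.le,
    setIntegral_abs_sub_rpow hΩ hf₀.continuous hf₁.continuous hf₀0 hf₁0 hdisj hq0 ha.le hb.le]
  calc (a ^ p * ∫ x in Ω, ‖fderiv ℝ f₀ x‖ ^ p) + b ^ p * ∫ x in Ω, ‖fderiv ℝ f₁ x‖ ^ p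
      ≤ a ^ p * (m * ∫ x in Ω, f₀ x ^ q) + b ^ p * (m * ∫ x in Ω, f₁ x ^ q) := by gcongr
    _ = m * ((a ^ p * ∫ x in Ω, f₀ x ^ q) + b ^ p * ∫ x in Ω, f₁ x ^ q) := by ring
    _ ≤ _ := mul_le_mul_of_nonneg_left hölder hm

end TwoBumps

section ConvexDomain

theorem setIntegral_norm_fderiv_comp_norm_sub_rpow_le {E : Type*} [NormedAddCommGroup E]
    [NormedSpace ℝ E] [FiniteDimensional ℝ E] [Nontrivial E] [MeasurableSpace E] [BorelSpace E]
    (μ : Measure E) [μ.IsAddHaarMeasure] {p q m : ℝ} {ψ : ℝ → ℝ} {L : ℝ≥0} {Ω : Set E}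
    (hp : 0 ≤ p) (hq : 0 ≤ q) (hΩc : Convex ℝ Ω) (hΩ : Bornology.IsBounded Ω)
    (hψ : LipschitzWith L ψ) {c : E} (hc : c ∈ closure Ω)
    (deficit_nonneg : ∀ r ∈ Icc 0 (diam Ω),
      0 ≤ ∫ s in 0..r, s ^ (Module.finrank ℝ E - 1) * energyDeficit p q m ψ s) :
    ∫ x in Ω, ‖fderiv ℝ (fun y => ψ ‖y - c‖) x‖ ^ p ∂μ ≤ m * ∫ x in Ω, ψ ‖x - c‖ ^ q ∂μ := by
  have := FiniteDimensional.proper ℝ E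
  have hf := lipschitzWith_comp_norm_sub hψ c
  have hψ_int : IntegrableOn (fun x => ψ ‖x - c‖ ^ q) (closure Ω) μ :=
    integrableOn_of_continuous_of_isBounded μ (hf.continuous.rpow_const fun _ => .inr hq) hΩ.closure
  have hψ_energy := integrableOn_norm_fderiv_rpow (μ := μ) hf hp hΩ.closure.measure_lt_top.ne
  have hac : μ.restrict (closure Ω) ≪ μ := Measure.restrict_le_self.absolutelyContinuous
  have closure_subset : closure Ω ⊆ closedBall c (diam Ω) := fun x hx => by
    rw [mem_closedBall, ← diam_closure]
    exact dist_le_diam_of_mem hΩ.closure hx hc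
  have key := setIntegral_comp_norm_sub_nonneg (μ := μ) (hΩc.closure.starConvex hc)
    isClosed_closure.measurableSet diam_nonneg closure_subset
    (((hψ_int.const_mul m).sub hψ_energy).congr
      (hac.ae_eq (energyDeficit_norm_sub_ae_eq μ hψ c)).symm) deficit_nonneg
  rw [integral_energyDeficit_norm_sub μ hac hψ c hψ_int hψ_energy, sub_nonneg] at key
  have h_frontier := closure_ae_eq_of_null_frontier (hΩc.addHaar_frontier μ)
  rwa [setIntegral_congr_set h_frontier, setIntegral_congr_set h_frontier] at key

variable {N : ℕ} {Ω : Set (EuclideanSpace ℝ (Fin N))} {p q m : ℝ}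

theorem muPQ_le_of_radial_profile [Nontrivial (EuclideanSpace ℝ (Fin N))] (hp : 1 < p)
    (hpq : p ≤ q) (hm : 0 ≤ m) (hΩo : IsOpen Ω) (hΩ : Bornology.IsBounded Ω) (hΩc : Convex ℝ Ω)
    (hΩne : Ω.Nonempty) {ψ : ℝ → ℝ} {L : ℝ≥0} (hψ : LipschitzWith L ψ) (hψ0 : ∀ r, 0 ≤ ψ r)
    (hψd : ∀ r, diam Ω / 2 ≤ r → ψ r = 0) (hψpos : 0 < ψ 0)
    (mass : ∫ x : EuclideanSpace ℝ (Fin N), ψ ‖x‖ ^ q ≤ 1)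
    (deficit_nonneg : ∀ r ∈ Icc 0 (diam Ω),
      0 ≤ ∫ s in 0..r,
        s ^ (Module.finrank ℝ (EuclideanSpace ℝ (Fin N)) - 1) * energyDeficit p q m ψ s) :
    muPQ p q Ω ≤ m := by
  have hq : 0 < q := by linarith
  obtain ⟨x₀, hx₀, x₁, hx₁, hdist⟩ := exists_dist_eq_diam hΩ hΩne
  have hne : x₀ ≠ x₁ := by
    rintro rfl
    rw [dist_self] at hdist
    exact hψpos.ne' (hψd 0 (by linarith))
  have lip (c : EuclideanSpace ℝ (Fin N)) := lipschitzWith_comp_norm_sub hψ c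
  have bump_pos {c} (hc : c ∈ closure Ω) : ∃ x ∈ Ω, 0 < ψ ‖x - c‖ := by
    obtain ⟨x, hx, hxΩ⟩ := mem_closure_iff.1 hc _
      (isOpen_lt continuous_const (lip c).continuous) (by simpa using hψpos)
    exact ⟨x, hxΩ, hx⟩
  have bumps_disjoint (x) : ψ ‖x - x₀‖ = 0 ∨ ψ ‖x - x₁‖ = 0 := by
    refine (le_total (diam Ω / 2) ‖x - x₀‖).imp (hψd _) fun h => hψd _ ?_
    have := dist_triangle_left x₀ x₁ x
    rw [hdist, dist_eq_norm, dist_eq_norm] at this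
    linarith
  have translates_disjoint : Disjoint ((· + x₀) ⁻¹' Ω) ((· + x₁) ⁻¹' Ω) :=
    disjoint_left.2 fun y hy₀ hy₁ => by
      have := dist_lt_diam_of_isOpen hΩo hΩ hy₀ hy₁ (by simpa using hne)
      rw [dist_add_left, hdist] at this
      exact this.false
  have hψ_int : Integrable fun x : EuclideanSpace ℝ (Fin N) => ψ ‖x‖ ^ q :=
    integrable_rpow_of_hasCompactSupport volume (by simpa using (lip 0).continuous)
      (hasCompactSupport_comp_norm hψd) hq
  exact muPQ_le_of_disjoint_bumps (by linarith) hpq (by linarith) hm hΩo hΩ (lip x₀) (lip x₁)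
    (fun _ => hψ0 _) (fun _ => hψ0 _) bumps_disjoint (bump_pos hx₀) (bump_pos hx₁)
    ((setIntegral_comp_sub_add_setIntegral_comp_sub_le hψ_int (fun x => rpow_nonneg (hψ0 _) q)
      hΩo.measurableSet translates_disjoint).trans mass)
    (setIntegral_norm_fderiv_comp_norm_sub_rpow_le volume (by linarith) hq.le hΩc hΩ hψ hx₀
      deficit_nonneg)
    (setIntegral_norm_fderiv_comp_norm_sub_rpow_le volume (by linarith) hq.le hΩc hΩ hψ hx₁
      deficit_nonneg)

theorem muPQ_le_of_energy_lt [Nontrivial (EuclideanSpace ℝ (Fin N))] (hp : 1 < p) (hpq : p ≤ q)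
    (hm : 0 ≤ m) (hΩo : IsOpen Ω) (hΩ : Bornology.IsBounded Ω) (hΩc : Convex ℝ Ω)
    (hΩne : Ω.Nonempty) {w : EuclideanSpace ℝ (Fin N) → ℝ} {L : ℝ≥0} (hw : LipschitzWith L w)
    (hwc : HasCompactSupport w) (hw0 : ∀ x, 0 ≤ w x)
    (hwd : ∀ x y, 0 < w x → 0 < w y → dist x y ≤ diam Ω) (mass : ∫ x, w x ^ q ≤ 1)
    (energy_lt : ∫ x, ‖fderiv ℝ w x‖ ^ p < m * ∫ x, w x ^ q) : muPQ p q Ω ≤ m := by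
  obtain ⟨ψ, hψ, hψ0, hψd, hψpos, ψ_mass, deficit_nonneg⟩ :=
    exists_radial_profile volume hp (by linarith) hm hw hwc hw0 diam_nonneg hwd energy_lt
  exact muPQ_le_of_radial_profile hp hpq hm hΩo hΩ hΩc hΩne hψ hψ0 hψd hψpos
    (ψ_mass.trans mass) deficit_nonneg

end ConvexDomain

section FirstVariation

theorem add_mul_sub_le_of_convexOn_of_hasDerivAt {f : ℝ → ℝ} {f' x : ℝ}
    (hf : ConvexOn ℝ univ f) (hx : HasDerivAt f f' x) (y : ℝ) : f x + f' * (y - x) ≤ f y := by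
  rcases lt_trichotomy x y with hxy | rfl | hyx
  · have := hf.le_slope_of_hasDerivAt (mem_univ x) (mem_univ y) hxy hx
    rw [slope_def_field, le_div_iff₀ (sub_pos.2 hxy)] at this
    linarith
  · simp
  · have := hf.slope_le_of_hasDerivAt (mem_univ y) (mem_univ x) hyx hx
    rw [slope_def_field, div_le_iff₀ (sub_pos.2 hyx)] at this
    linarith

variable {q : ℝ}

theorem convexOn_abs_rpow (hq : 1 ≤ q) : ConvexOn ℝ univ fun t : ℝ => |t| ^ q :=
  ⟨convex_univ, fun s _ t _ a b ha hb hab => calc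
    |a • s + b • t| ^ q ≤ (a • |s| + b • |t|) ^ q :=
      rpow_le_rpow (abs_nonneg _) (convexOn_univ_norm.2 (mem_univ s) (mem_univ t) ha hb hab)
        (zero_le_one.trans hq)
    _ ≤ a • |s| ^ q + b • |t| ^ q := (convexOn_rpow hq).2 (abs_nonneg s) (abs_nonneg t) ha hb hab⟩

theorem abs_rpow_add_mul_sub_le (hq : 1 < q) (s t : ℝ) :
    |s| ^ q + q * (|s| ^ (q - 2) * s) * (t - s) ≤ |t| ^ q := by
  simpa [mul_assoc] using add_mul_sub_le_of_convexOn_of_hasDerivAt (convexOn_abs_rpow hq.le)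
    (hasDerivAt_abs_rpow s hq) t

theorem continuous_abs_rpow_sub_two_mul_self (hq : 1 < q) :
    Continuous fun t : ℝ => |t| ^ (q - 2) * t := by
  have deriv_eq (t : ℝ) : q⁻¹ * deriv (fun s : ℝ => ‖s‖ ^ q) t = |t| ^ (q - 2) * t := by
    rw [(hasDerivAt_norm_rpow t hq).deriv, norm_eq_abs]
    field_simp
  simp only [← deriv_eq]
  exact ((contDiff_norm_rpow hq).continuous_deriv le_rfl).const_mul q⁻¹

theorem le_mul_of_forall_one_sub_rpow_mul_le {p E M m δ₀ : ℝ} (hq : q ≠ 0) (hp : 0 < p)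
    (hδ₀ : 0 < δ₀) (h : ∀ δ ∈ Ioo 0 δ₀,
      (1 - (1 - δ) ^ p) * E ≤ m * (1 - (1 - q * δ * M) ^ (p / q))) : E ≤ m * M := by
  have deriv_mass :
      HasDerivAt (fun δ : ℝ => m * (1 - (1 - q * δ * M) ^ (p / q))) (m * (p * M)) 0 := by
    have := (((hasDerivAt_id (0 : ℝ)).const_mul q).mul_const M).const_sub 1
    refine (((this.rpow_const (p := p / q) (.inl (by simp))).const_sub 1).const_mul
      m).congr_deriv ?_
    simp only [id, mul_zero, zero_mul, sub_zero, one_rpow]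
    field_simp
  have deriv_energy : HasDerivAt (fun δ : ℝ => (1 - (1 - δ) ^ p) * E) (p * E) 0 := by
    have := (hasDerivAt_id (0 : ℝ)).const_sub 1
    refine (((this.rpow_const (p := p) (.inl (by simp))).const_sub 1).mul_const E).congr_deriv ?_
    simp
  have slope_nonneg : 0 ≤ m * (p * M) - p * E := by
    refine ge_of_tendsto (deriv_mass.sub deriv_energy).tendsto_slope_zero_right ?_
    filter_upwards [Ioo_mem_nhdsGT hδ₀] with δ hδ
    simpa using mul_nonneg (inv_nonneg.2 hδ.1.le) (sub_nonneg.2 (h δ hδ))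
  nlinarith

variable {E : Type*} [NormedAddCommGroup E] [NormedSpace ℝ E] [FiniteDimensional ℝ E]
  [MeasurableSpace E] [BorelSpace E] (μ : Measure E) [μ.IsAddHaarMeasure] {Ω : Set E}

theorem exists_setIntegral_abs_add_rpow_mul_eq_zero (hq : 1 < q) (hΩm : MeasurableSet Ω)
    (hΩ : Bornology.IsBounded Ω) {v : E → ℝ} (hv : Continuous v) :
    ∃ c : ℝ, ∫ x in Ω, |v x + c| ^ (q - 2) * (v x + c) ∂μ = 0 := by
  have := FiniteDimensional.proper ℝ E
  have h_cont : Continuous fun c : ℝ => ∫ x in Ω, |v x + c| ^ (q - 2) * (v x + c) ∂μ := by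
    have integrand_cont : Continuous
        (Function.uncurry fun (c : ℝ) (x : E) => |v x + c| ^ (q - 2) * (v x + c)) :=
      (continuous_abs_rpow_sub_two_mul_self hq).comp
        (by fun_prop : Continuous fun z : ℝ × E => v z.2 + z.1)
    simpa [Measure.restrict_restrict isClosed_closure.measurableSet,
      inter_eq_self_of_subset_right subset_closure] using
      continuous_parametric_integral_of_continuous (μ := μ.restrict Ω) integrand_cont
        hΩ.isCompact_closure
  obtain ⟨B, hB⟩ := hΩ.isCompact_closure.exists_bound_of_continuousOn hv.continuousOn
  have hB (x) (hx : x ∈ Ω) : |v x| ≤ B := hB x (subset_closure hx)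
  refine mem_range_of_exists_le_of_exists_ge h_cont ⟨-B, ?_⟩ ⟨B, ?_⟩
  · refine setIntegral_nonpos hΩm fun x hx => mul_nonpos_of_nonneg_of_nonpos (by positivity) ?_
    linarith [(abs_le.1 (hB x hx)).2]
  · refine setIntegral_nonneg hΩm fun x hx => mul_nonneg (by positivity) ?_
    linarith [(abs_le.1 (hB x hx)).1]

variable {μ}

theorem setIntegral_abs_rpow_add_le (hq : 1 < q) (hΩ : Bornology.IsBounded Ω) {u v : E → ℝ}
    (hu : Continuous u) (hv : Continuous v) :
    ∫ x in Ω, |u x| ^ q ∂μ + q * ∫ x in Ω, |u x| ^ (q - 2) * u x * (v x - u x) ∂μ ≤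
      ∫ x in Ω, |v x| ^ q ∂μ := by
  have integrableOn_abs_rpow {f : E → ℝ} (hf : Continuous f) :
      IntegrableOn (fun x => |f x| ^ q) Ω μ :=
    integrableOn_of_continuous_of_isBounded μ
      (hf.abs.rpow_const fun _ => .inr (zero_le_one.trans hq.le)) hΩ
  have tangent_int : IntegrableOn (fun x => q * (|u x| ^ (q - 2) * u x * (v x - u x))) Ω μ :=
    integrableOn_of_continuous_of_isBounded μ ((((continuous_abs_rpow_sub_two_mul_self hq).comp
      hu).mul (hv.sub hu)).const_mul q) hΩ
  rw [← integral_const_mul, ← integral_add (integrableOn_abs_rpow hu) tangent_int]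
  refine integral_mono ((integrableOn_abs_rpow hu).add tangent_int) (integrableOn_abs_rpow hv)
    fun x => ?_
  simpa [mul_assoc] using abs_rpow_add_mul_sub_le hq (u x) (v x)

/-- `w` coincides with `u` on a part of `{u > 0}` and vanishes elsewhere. This is how the
restriction `u · 1_D` of `u` to a positive nodal domain `D` enters the first variation. -/
def IsNodalRestriction {X : Type*} (w u : X → ℝ) : Prop :=
  ∀ x, w x = 0 ∨ w x = u x ∧ 0 < u x

namespace IsNodalRestriction

theorem nonneg {X : Type*} {w u : X → ℝ} (h : IsNodalRestriction w u) (x : X) : 0 ≤ w x :=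
  (h x).elim (fun hx => hx.ge) fun hx => hx.1 ▸ hx.2.le

theorem abs_rpow_mul {X : Type*} {w u : X → ℝ} (h : IsNodalRestriction w u) (hq : q ≠ 0) (x : X) :
    |u x| ^ (q - 2) * u x * w x = w x ^ q := by
  rcases h x with hx | ⟨hx, hux⟩
  · rw [hx, mul_zero, zero_rpow hq]
  · rw [hx, abs_of_pos hux, ← rpow_add_one hux.ne', ← rpow_add_one hux.ne']
    ring_nf

theorem fderiv_eq {E : Type*} [NormedAddCommGroup E] [NormedSpace ℝ E] {w u : E → ℝ}
    (h : IsNodalRestriction w u) (hw : Continuous w) (x : E) :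
    fderiv ℝ w x = 0 ∨ fderiv ℝ w x = fderiv ℝ u x := by
  rcases eq_or_ne (w x) 0 with hx | hx
  · exact .inl (fderiv_eq_zero_of_nonneg_of_eq_zero h.nonneg hx)
  · refine .inr (Filter.EventuallyEq.fderiv_eq ?_)
    filter_upwards [hw.continuousAt.eventually_ne hx] with y hy
    exact ((h y).resolve_left hy).1

variable {w u : E → ℝ} (h : IsNodalRestriction w u)
include h

theorem setIntegral_rpow_le (hq : 0 < q) (hΩ : Bornology.IsBounded Ω) (hw : Continuous w)
    (hu : Continuous u) : ∫ x in Ω, w x ^ q ∂μ ≤ ∫ x in Ω, |u x| ^ q ∂μ := by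
  refine integral_mono
    (integrableOn_of_continuous_of_isBounded μ (hw.rpow_const fun _ => .inr hq.le) hΩ)
    (integrableOn_of_continuous_of_isBounded μ (hu.abs.rpow_const fun _ => .inr hq.le) hΩ)
    fun x => rpow_le_rpow (h.nonneg x) ?_ hq.le
  exact (h x).elim (fun hx => hx.trans_le (abs_nonneg _)) fun hx => hx.1.trans_le (le_abs_self _)

theorem sub_mul_setIntegral_rpow_le (hq : 1 < q) (hΩ : Bornology.IsBounded Ω) (hw : Continuous w)
    (hu : Continuous u) (hmean : ∫ x in Ω, |u x| ^ (q - 2) * u x ∂μ = 0) (δ c : ℝ) :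
    ∫ x in Ω, |u x| ^ q ∂μ - q * δ * ∫ x in Ω, w x ^ q ∂μ ≤
      ∫ x in Ω, |u x - δ * w x + c| ^ q ∂μ := by
  have hq0 : 0 < q := by linarith
  have w_int := integrableOn_of_continuous_of_isBounded μ (hw.rpow_const fun _ => .inr hq0.le) hΩ
  have u_int : IntegrableOn (fun x => |u x| ^ (q - 2) * u x) Ω μ :=
    integrableOn_of_continuous_of_isBounded μ ((continuous_abs_rpow_sub_two_mul_self hq).comp hu)
      hΩ
  have pairing : ∫ x in Ω, |u x| ^ (q - 2) * u x * (u x - δ * w x + c - u x) ∂μ =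
      -(δ * ∫ x in Ω, w x ^ q ∂μ) := by
    calc _ = ∫ x in Ω, (c * (|u x| ^ (q - 2) * u x) - δ * w x ^ q) ∂μ := by
          congr with x
          rw [← h.abs_rpow_mul hq0.ne' x]
          ring
      _ = _ := by
          rw [integral_sub (u_int.const_mul c) (w_int.const_mul δ), integral_const_mul,
            integral_const_mul, hmean]
          ring
  have key := setIntegral_abs_rpow_add_le (μ := μ) hq hΩ hu
    (v := fun x => u x - δ * w x + c) (by fun_prop)
  rw [pairing] at key
  linarith

theorem setIntegral_norm_fderiv_sub_mul_add_rpow {p : ℝ} {K L : ℝ≥0} (hp : 0 < p)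
    (hΩ : Bornology.IsBounded Ω) (hw : LipschitzWith L w) (hu : LipschitzWith K u) {δ : ℝ}
    (hδ : δ ≤ 1) (c : ℝ) :
    ∫ x in Ω, ‖fderiv ℝ (fun x => u x - δ * w x + c) x‖ ^ p ∂μ =
      ∫ x in Ω, ‖fderiv ℝ u x‖ ^ p ∂μ - (1 - (1 - δ) ^ p) * ∫ x in Ω, ‖fderiv ℝ w x‖ ^ p ∂μ := by
  have := FiniteDimensional.proper ℝ E
  have hΩ_top : μ Ω ≠ ∞ := hΩ.measure_lt_top.ne
  rw [← integral_const_mul, ← integral_sub (integrableOn_norm_fderiv_rpow hu hp.le hΩ_top)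
    ((integrableOn_norm_fderiv_rpow hw hp.le hΩ_top).const_mul _)]
  refine integral_congr_ae (ae_restrict_of_ae ?_)
  filter_upwards [hu.ae_differentiableAt, hw.ae_differentiableAt] with x hux hwx
  rw [fderiv_add_const, fderiv_fun_sub hux (hwx.const_mul δ), fderiv_const_mul hwx]
  rcases h.fderiv_eq hw.continuous x with hx | hx
  · simp [hx, hp.ne']
  · have smul_eq : fderiv ℝ u x - δ • fderiv ℝ u x = (1 - δ) • fderiv ℝ u x := by module
    rw [hx, smul_eq, norm_smul, norm_of_nonneg (sub_nonneg.2 hδ),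
      mul_rpow (sub_nonneg.2 hδ) (norm_nonneg _)]
    ring

end IsNodalRestriction

/-- `u` attains the infimum defining `muPQ p q Ω` and has unit `L^q` norm on `Ω`. -/
structure IsNormalizedMinimizer {N : ℕ} (p q : ℝ) (Ω : Set (EuclideanSpace ℝ (Fin N)))
    (u : EuclideanSpace ℝ (Fin N) → ℝ) : Prop where
  mean_eq_zero : ∫ x in Ω, |u x| ^ (q - 2) * u x = 0
  mass_eq_one : ∫ x in Ω, |u x| ^ q = 1
  energy_eq : ∫ x in Ω, ‖fderiv ℝ u x‖ ^ p = muPQ p q Ω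

theorem IsNodalRestriction.setIntegral_norm_fderiv_rpow_le {N : ℕ}
    {Ω : Set (EuclideanSpace ℝ (Fin N))} {w u : EuclideanSpace ℝ (Fin N) → ℝ} {p : ℝ} {K L : ℝ≥0}
    (h : IsNodalRestriction w u) (hp : 0 < p) (hq : 1 < q) (hΩo : IsOpen Ω)
    (hΩ : Bornology.IsBounded Ω) (hw : LipschitzWith L w) (hu : LipschitzWith K u)
    (hmin : IsNormalizedMinimizer p q Ω u) :
    ∫ x in Ω, ‖fderiv ℝ w x‖ ^ p ≤ muPQ p q Ω * ∫ x in Ω, w x ^ q := by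
  have hq0 : 0 < q := by linarith
  have hM := h.setIntegral_rpow_le (μ := volume) hq0 hΩ hw.continuous hu.continuous
  rw [hmin.mass_eq_one] at hM
  refine le_mul_of_forall_one_sub_rpow_mul_le hq0.ne' hp (inv_pos.2 hq0) fun δ hδ => ?_
  have hqδ : q * δ < 1 := by simpa [hq0.ne'] using mul_lt_mul_of_pos_left hδ.2 hq0
  have hδ1 : δ < 1 := by nlinarith [hδ.1]
  obtain ⟨c, hc⟩ := exists_setIntegral_abs_add_rpow_mul_eq_zero volume hq hΩo.measurableSet hΩ
    (v := fun x => u x - δ * w x) (hu.continuous.sub (hw.continuous.const_mul δ))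
  have v_lip : LipschitzWith (K + ‖δ‖₊ * L) fun x => u x - δ * w x + c := by
    simpa using (hu.sub ((lipschitzWith_smul δ).comp hw)).add (LipschitzWith.const c)
  have mass_le := h.sub_mul_setIntegral_rpow_le (μ := volume) hq hΩ hw.continuous hu.continuous
    hmin.mean_eq_zero δ c
  rw [hmin.mass_eq_one] at mass_le
  have mass_pos : 0 < 1 - q * δ * ∫ x in Ω, w x ^ q := by nlinarith [mul_pos hq0 hδ.1]
  have v_ne : ∃ x ∈ Ω, u x - δ * w x + c ≠ 0 := by
    by_contra! hv
    refine (mass_pos.trans_le mass_le).ne' (setIntegral_eq_zero_of_forall_eq_zero fun x hx => ?_)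
    rw [hv x hx, abs_zero, zero_rpow hq0.ne']
  have quotient := muPQ_le_rayleighQuot (p := p) (v_lip.lipschitzOnWith (s := closure Ω)) v_ne hc
  rw [rayleighQuot, h.setIntegral_norm_fderiv_sub_mul_add_rpow hp hΩ hw hu hδ1.le c, hmin.energy_eq,
    le_div_iff₀ (rpow_pos_of_pos (mass_pos.trans_le mass_le) _)] at quotient
  have muPQ_nonneg : 0 ≤ muPQ p q Ω := hmin.energy_eq ▸ integral_nonneg fun _ => by positivity
  have := mul_le_mul_of_nonneg_left
    (rpow_le_rpow mass_pos.le mass_le (div_nonneg hp.le hq0.le)) muPQ_nonneg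
  linarith

end FirstVariation

section Dilation

section Energy

variable {E : Type*} [NormedAddCommGroup E] [NormedSpace ℝ E] [FiniteDimensional ℝ E]
  [Nontrivial E] [MeasurableSpace E] [BorelSpace E] {μ : Measure E} [μ.IsAddHaarMeasure]
  {w : E → ℝ} {L : ℝ≥0}

theorem integral_eq_zero_of_fderiv_ae_eq_zero (hw : LipschitzWith L w) (hwc : HasCompactSupport w)
    (h : ∀ᵐ x ∂μ, fderiv ℝ w x = 0) : ∫ x, w x ∂μ = 0 := by
  obtain ⟨e, he⟩ := exists_ne (0 : E)
  obtain ⟨f, -, hfe⟩ := exists_dual_vector ℝ e (norm_ne_zero_iff.2 he)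
  have by_parts := f.lipschitz.integral_lineDeriv_mul_eq (μ := μ) hw hwc e
  have lineDeriv_f (x : E) : lineDeriv ℝ f x e = ‖e‖ := by
    rw [f.differentiableAt.lineDeriv_eq_fderiv, ContinuousLinearMap.fderiv, hfe]
    rfl
  have lineDeriv_w : (fun x => lineDeriv ℝ w x (-e) * f x) =ᵐ[μ] 0 := by
    filter_upwards [h, hw.ae_differentiableAt] with x hx hdiff
    simp [hdiff.lineDeriv_eq_fderiv, hx]
  rw [integral_congr_ae lineDeriv_w] at by_parts
  simpa [lineDeriv_f, integral_const_mul, he] using by_parts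

theorem integral_norm_fderiv_rpow_pos {p : ℝ} (hp : 0 < p) (hw : LipschitzWith L w)
    (hwc : HasCompactSupport w) (hw0 : ∀ x, 0 ≤ w x) (hpos : ∃ x, 0 < w x) :
    0 < ∫ x, ‖fderiv ℝ w x‖ ^ p ∂μ := by
  refine (integral_nonneg fun x => by positivity).lt_of_ne fun h => ?_
  have energy_ae := (integral_eq_zero_iff_of_nonneg (fun x => by positivity)
    (integrable_norm_fderiv_rpow (μ := μ) hw hwc hp)).1 h.symm
  have fderiv_ae : ∀ᵐ x ∂μ, fderiv ℝ w x = 0 := by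
    filter_upwards [energy_ae] with x hx
    exact norm_eq_zero.1 ((rpow_eq_zero (norm_nonneg _) hp.ne').1 hx)
  obtain ⟨x, hx⟩ := hpos
  exact (hw.continuous.integral_pos_of_hasCompactSupport_nonneg_nonzero hwc hw0 hx.ne').ne'
    (integral_eq_zero_of_fderiv_ae_eq_zero hw hwc fderiv_ae)

end Energy

variable {E : Type*} [NormedAddCommGroup E] [NormedSpace ℝ E]

/-- The dilation of `w` about the origin by the factor `ρ`, normalised so as to preserve
`∫ w ^ q`. -/
noncomputable def dilate (q ρ : ℝ) (w : E → ℝ) (x : E) : ℝ :=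
  ρ ^ (-(Module.finrank ℝ E : ℝ) / q) * w (ρ⁻¹ • x)

variable {w : E → ℝ} {L : ℝ≥0} {p q ρ : ℝ}

theorem lipschitzWith_dilate (hw : LipschitzWith L w) (q ρ : ℝ) :
    LipschitzWith (‖ρ ^ (-(Module.finrank ℝ E : ℝ) / q)‖₊ * (L * ‖ρ⁻¹‖₊)) (dilate q ρ w) :=
  (lipschitzWith_smul _).comp (hw.comp (lipschitzWith_smul ρ⁻¹))

theorem hasCompactSupport_dilate (hw : HasCompactSupport w) (hρ : ρ ≠ 0) :
    HasCompactSupport (dilate q ρ w) :=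
  (hw.comp_smul (inv_ne_zero hρ)).mul_left

theorem dilate_nonneg (hw : ∀ x, 0 ≤ w x) (hρ : 0 ≤ ρ) (x : E) : 0 ≤ dilate q ρ w x :=
  mul_nonneg (rpow_nonneg hρ _) (hw _)

theorem dilate_pos_iff (hρ : 0 < ρ) {x : E} : 0 < dilate q ρ w x ↔ 0 < w (ρ⁻¹ • x) :=
  mul_pos_iff_of_pos_left (rpow_pos_of_pos hρ _)

variable [FiniteDimensional ℝ E] [MeasurableSpace E] [BorelSpace E] (μ : Measure E)
  [μ.IsAddHaarMeasure]

theorem integral_dilate_rpow (hw : ∀ x, 0 ≤ w x) (hq : q ≠ 0) (hρ : 0 < ρ) :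
    ∫ x, dilate q ρ w x ^ q ∂μ = ∫ x, w x ^ q ∂μ := by
  simp_rw [dilate, mul_rpow (rpow_nonneg hρ.le _) (hw _)]
  rw [integral_const_mul, Measure.integral_comp_inv_smul_of_nonneg μ (fun x => w x ^ q) hρ.le,
    smul_eq_mul, ← mul_assoc, ← rpow_mul hρ.le, ← rpow_natCast, ← rpow_add hρ,
    div_mul_cancel₀ _ hq, neg_add_cancel, rpow_zero, one_mul]

theorem integral_norm_fderiv_dilate_rpow (hρ : 0 < ρ) :
    ∫ x, ‖fderiv ℝ (dilate q ρ w) x‖ ^ p ∂μ =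
      ρ ^ (Module.finrank ℝ E - p - Module.finrank ℝ E * p / q : ℝ) *
        ∫ x, ‖fderiv ℝ w x‖ ^ p ∂μ := by
  set κ := ρ ^ (-(Module.finrank ℝ E : ℝ) / q) with hκ
  have hκ0 : 0 < κ := rpow_pos_of_pos hρ _
  have fderiv_dilate (x : E) : fderiv ℝ (dilate q ρ w) x = (κ * ρ⁻¹) • fderiv ℝ w (ρ⁻¹ • x) := by
    have dilate_eq : dilate q ρ w = κ • fun x => w (ρ⁻¹ • x) := rfl
    rw [dilate_eq, fderiv_const_smul_field, mul_smul, ← fderiv_comp_smul]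
    rfl
  have exponent : (κ * ρ⁻¹) ^ p * ρ ^ Module.finrank ℝ E =
      ρ ^ (Module.finrank ℝ E - p - Module.finrank ℝ E * p / q : ℝ) := by
    rw [hκ, ← rpow_neg_one ρ, ← rpow_add hρ, ← rpow_mul hρ.le, ← rpow_natCast, ← rpow_add hρ]
    ring_nf
  simp_rw [fderiv_dilate, norm_smul, norm_of_nonneg (mul_pos hκ0 (inv_pos.2 hρ)).le,
    mul_rpow (mul_pos hκ0 (inv_pos.2 hρ)).le (norm_nonneg _)]
  rw [integral_const_mul, Measure.integral_comp_inv_smul_of_nonneg μ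
    (fun x => ‖fderiv ℝ w x‖ ^ p) hρ.le, smul_eq_mul, ← mul_assoc, exponent]

theorem sub_sub_mul_div_neg_of_ltCritical {N : ℕ} (hN : 0 < N) (hp : 0 < p) (hq : 0 < q)
    (h : ltCritical N p q) : (N : ℝ) - p - N * p / q < 0 := by
  have subcritical : q * (N - p) < N * p := by
    rcases lt_or_ge p N with hpN | hNp
    · exact (lt_div_iff₀ (sub_pos.2 hpN)).1 (h hpN)
    · calc q * (N - p) ≤ 0 := mul_nonpos_of_nonneg_of_nonpos hq.le (by linarith)
        _ < N * p := by positivity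
  rw [sub_neg, lt_div_iff₀ hq]
  linarith

theorem muPQ_mul_integral_rpow_lt {N : ℕ} [Nontrivial (EuclideanSpace ℝ (Fin N))]
    {Ω : Set (EuclideanSpace ℝ (Fin N))} (hp : 1 < p) (hpq : p ≤ q) (hq : ltCritical N p q)
    (hΩo : IsOpen Ω) (hΩ : Bornology.IsBounded Ω) (hΩc : Convex ℝ Ω) (hΩne : Ω.Nonempty)
    {w : EuclideanSpace ℝ (Fin N) → ℝ} (hw : LipschitzWith L w) (hwc : HasCompactSupport w)
    (hw0 : ∀ x, 0 ≤ w x) (hpos : ∃ x, 0 < w x) (hρ : 1 < ρ)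
    (hwd : ∀ x y, 0 < w x → 0 < w y → ρ * dist x y ≤ diam Ω) (mass : ∫ x, w x ^ q ≤ 1) :
    muPQ p q Ω * ∫ x, w x ^ q < ∫ x, ‖fderiv ℝ w x‖ ^ p := by
  have hρ0 : 0 < ρ := by linarith
  have hq0 : 0 < q := by linarith
  have mass_pos : 0 < ∫ x, w x ^ q := by
    obtain ⟨x, hx⟩ := hpos
    refine Continuous.integral_pos_of_hasCompactSupport_nonneg_nonzero
      (hw.continuous.rpow_const fun _ => .inr hq0.le)
      (hwc.comp_left (g := (· ^ q)) (zero_rpow hq0.ne')) (fun x => rpow_nonneg (hw0 x) q)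
      (rpow_pos_of_pos hx q).ne'
  have energy_pos := integral_norm_fderiv_rpow_pos (μ := volume) (by linarith : 0 < p) hw hwc
    hw0 hpos
  have hN : 0 < N := by
    simpa using Module.finrank_pos (R := ℝ) (M := EuclideanSpace ℝ (Fin N))
  have energy_dilate_lt : ∫ x, ‖fderiv ℝ (dilate q ρ w) x‖ ^ p < ∫ x, ‖fderiv ℝ w x‖ ^ p := by
    rw [integral_norm_fderiv_dilate_rpow volume hρ0, finrank_euclideanSpace_fin]
    exact mul_lt_of_lt_one_left energy_pos (rpow_lt_one_of_one_lt_of_neg hρ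
      (sub_sub_mul_div_neg_of_ltCritical hN (by linarith) hq0 hq))
  have mass_dilate := integral_dilate_rpow volume hw0 hq0.ne' hρ0
  refine lt_of_not_ge fun energy_le => ?_
  obtain ⟨m, hm, hmμ⟩ := exists_between
    ((div_lt_iff₀ mass_pos).2 (energy_dilate_lt.trans_le energy_le))
  refine hmμ.not_ge (muPQ_le_of_energy_lt hp hpq (le_trans (by positivity) hm.le) hΩo hΩ hΩc hΩne
    (lipschitzWith_dilate hw q ρ) (hasCompactSupport_dilate hwc hρ0.ne')
    (dilate_nonneg hw0 hρ0.le) (fun x y hx hy => ?_) (mass_dilate.trans_le mass) ?_)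
  · have := hwd _ _ ((dilate_pos_iff hρ0).1 hx) ((dilate_pos_iff hρ0).1 hy)
    rwa [dist_smul₀, norm_of_nonneg (by positivity), mul_inv_cancel_left₀ hρ0.ne'] at this
  · rwa [mass_dilate, ← div_lt_iff₀ mass_pos]

end Dilation

section NodalDomain

theorem inter_frontier_nonempty_of_isPreconnected {X : Type*} [TopologicalSpace X] {S D : Set X}
    (hS : IsPreconnected S) (hSD : (S ∩ D).Nonempty) (hSDc : (S ∩ Dᶜ).Nonempty) :
    (S ∩ frontier D).Nonempty := by
  by_contra! h
  have h_cover : S ⊆ interior D ∪ (closure D)ᶜ := fun x hx => by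
    by_contra hx'
    rw [mem_union, not_or, notMem_compl_iff] at hx'
    exact h.subset ⟨hx, hx'.2, hx'.1⟩
  obtain ⟨x, hx, hxD⟩ := hSD
  obtain ⟨y, hy, hyD⟩ := hSDc
  obtain ⟨z, -, hz, hz'⟩ := hS _ _ isOpen_interior isClosed_closure.isOpen_compl h_cover
    ⟨x, hx, (h_cover hx).resolve_right (not_not_intro (subset_closure hxD))⟩
    ⟨y, hy, (h_cover hy).resolve_left fun hy' => hyD (interior_subset hy')⟩
  exact hz' (subset_closure (interior_subset hz))

theorem lipschitzWith_indicator_of_forall_mem_frontier {E : Type*} [NormedAddCommGroup E]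
    [NormedSpace ℝ E] {F : Type*} [SeminormedAddCommGroup F] {u : E → F} {K : ℝ≥0} {D : Set E}
    (hu : LipschitzWith K u) (hD : ∀ z ∈ frontier D, u z = 0) :
    LipschitzWith K (D.indicator u) := by
  have norm_le {x y : E} (hx : x ∈ D) (hy : y ∉ D) : ‖u x‖ ≤ K * dist x y := by
    obtain ⟨z, hz, hzD⟩ := inter_frontier_nonempty_of_isPreconnected
      (convex_segment x y).isPreconnected ⟨x, left_mem_segment ℝ x y, hx⟩
      ⟨y, right_mem_segment ℝ x y, hy⟩
    calc ‖u x‖ = dist (u x) (u z) := by rw [hD z hzD, dist_zero_right]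
      _ ≤ K * dist x z := hu.dist_le_mul x z
      _ ≤ K * dist x y := by
        gcongr
        linarith [dist_add_dist_of_mem_segment hz, dist_nonneg (x := z) (y := y)]
  refine LipschitzWith.of_dist_le_mul fun x y => ?_
  by_cases hx : x ∈ D <;> by_cases hy : y ∈ D
  · simpa [hx, hy] using hu.dist_le_mul x y
  · simpa [hx, hy] using norm_le hx hy
  · simpa [hx, hy, dist_comm x y] using norm_le hy hx
  · simp only [hx, hy, not_false_eq_true, indicator_of_notMem, dist_self]
    positivity

theorem notMem_of_mem_frontier_connectedComponentIn {X : Type*} [TopologicalSpace X]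
    [LocallyConnectedSpace X] {F : Set X} (hF : IsOpen F) {x z : X}
    (hz : z ∈ frontier (connectedComponentIn F x)) : z ∉ F := by
  intro hzF
  rw [hF.connectedComponentIn.frontier_eq] at hz
  have hx : x ∈ F := connectedComponentIn_nonempty_iff.1 (closure_nonempty_iff.1 ⟨z, hz.1⟩)
  have insert_preconnected : IsPreconnected (insert z (connectedComponentIn F x)) :=
    isPreconnected_connectedComponentIn.subset_closure (subset_insert _ _)
      (insert_subset hz.1 subset_closure)
  exact hz.2 (insert_preconnected.subset_connectedComponentIn
    (mem_insert_of_mem z (mem_connectedComponentIn hx))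
    (insert_subset hzF (connectedComponentIn_subset F x)) (mem_insert z _))

theorem diam_lt_diam_of_closure_subset {E : Type*} [NormedAddCommGroup E] [NormedSpace ℝ E]
    [ProperSpace E] [Nontrivial E] {D Ω : Set E} (hΩo : IsOpen Ω) (hΩ : Bornology.IsBounded Ω)
    (hne : D.Nonempty) (hD : closure D ⊆ Ω) : diam D < diam Ω := by
  obtain ⟨x, hx, y, hy, hxy⟩ := exists_dist_eq_diam (hΩ.subset (subset_closure.trans hD)) hne
  rw [← hxy]
  rcases eq_or_ne x y with rfl | hne
  · rw [dist_self]
    exact diam_pos (infinite_of_mem_nhds x (hΩo.mem_nhds (hD hx))).nontrivial hΩ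
  · exact dist_lt_diam_of_isOpen hΩo hΩ (hD hx) (hD hy) hne

theorem exists_one_lt_mul_le {a b : ℝ} (ha : 0 ≤ a) (hab : a < b) : ∃ ρ, 1 < ρ ∧ ρ * a ≤ b := by
  rcases ha.eq_or_lt with rfl | ha
  · exact ⟨2, one_lt_two, by linarith⟩
  · exact ⟨b / a, (one_lt_div ha).2 hab, (div_mul_cancel₀ b ha.ne').le⟩

variable {N : ℕ} {Ω : Set (EuclideanSpace ℝ (Fin N))} {p q : ℝ}
  {u w : EuclideanSpace ℝ (Fin N) → ℝ} {K L : ℝ≥0}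

namespace IsNormalizedMinimizer

theorem neg (h : IsNormalizedMinimizer p q Ω u) : IsNormalizedMinimizer p q Ω fun x => -u x where
  mean_eq_zero := by simp only [abs_neg, mul_neg, integral_neg, h.mean_eq_zero, neg_zero]
  mass_eq_one := by simpa only [abs_neg] using h.mass_eq_one
  energy_eq := by simpa only [fderiv_fun_neg, norm_neg] using h.energy_eq

theorem congr (h : IsNormalizedMinimizer p q Ω u) (hΩo : IsOpen Ω) (huw : EqOn u w Ω) :
    IsNormalizedMinimizer p q Ω w where
  mean_eq_zero := by
    rw [← h.mean_eq_zero]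
    exact setIntegral_congr_fun hΩo.measurableSet fun x hx => by simp only [huw hx]
  mass_eq_one := by
    rw [← h.mass_eq_one]
    exact setIntegral_congr_fun hΩo.measurableSet fun x hx => by simp only [huw hx]
  energy_eq := by
    rw [← h.energy_eq]
    refine setIntegral_congr_fun hΩo.measurableSet fun x hx => ?_
    simp only [(huw.eventuallyEq_of_mem (hΩo.mem_nhds hx)).fderiv_eq]

theorem nontrivial_of_pos (h : IsNormalizedMinimizer p q Ω u) (hq : 1 < q) (hΩo : IsOpen Ω)
    (hΩ : Bornology.IsBounded Ω) (hu : Continuous u) {x : EuclideanSpace ℝ (Fin N)} (hx : x ∈ Ω)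
    (hux : 0 < u x) : Nontrivial (EuclideanSpace ℝ (Fin N)) := by
  by_contra hE
  have := not_nontrivial_iff_subsingleton.1 hE
  have hu_pos (y) : 0 < u y := Subsingleton.elim x y ▸ hux
  have integrand_pos (y) : 0 < |u y| ^ (q - 2) * u y :=
    mul_pos (rpow_pos_of_pos (abs_pos.2 (hu_pos y).ne') _) (hu_pos y)
  exact (setIntegral_pos_of_continuous volume ((continuous_abs_rpow_sub_two_mul_self hq).comp hu)
    (fun y => (integrand_pos y).le) hΩo hΩ ⟨x, hx, integrand_pos x⟩).ne' h.mean_eq_zero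

end IsNormalizedMinimizer

theorem IsNodalRestriction.eq_zero_of_tsupport_subset [Nontrivial (EuclideanSpace ℝ (Fin N))]
    (h : IsNodalRestriction w u) (hp : 1 < p) (hpq : p ≤ q) (hq : ltCritical N p q)
    (hΩo : IsOpen Ω) (hΩ : Bornology.IsBounded Ω) (hΩc : Convex ℝ Ω) (hw : LipschitzWith L w)
    (hu : LipschitzWith K u) (hmin : IsNormalizedMinimizer p q Ω u) (hwΩ : tsupport w ⊆ Ω) :
    w = 0 := by
  by_contra hne
  have w_zero {x} (hx : x ∉ Ω) : w x = 0 := image_eq_zero_of_notMem_tsupport fun hx' => hx (hwΩ hx')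
  have mass_eq : ∫ x in Ω, w x ^ q = ∫ x, w x ^ q :=
    setIntegral_eq_integral_of_forall_compl_eq_zero fun x hx => by
      rw [w_zero hx, zero_rpow (by linarith)]
  have energy_eq : ∫ x in Ω, ‖fderiv ℝ w x‖ ^ p = ∫ x, ‖fderiv ℝ w x‖ ^ p :=
    setIntegral_eq_integral_of_forall_compl_eq_zero fun x hx => by
      rw [fderiv_eq_zero_of_nonneg_of_eq_zero h.nonneg (w_zero hx), norm_zero,
        zero_rpow (by linarith)]
  have mass_le := h.setIntegral_rpow_le (μ := volume) (by linarith : 0 < q) hΩ hw.continuous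
    hu.continuous
  have energy_le := h.setIntegral_norm_fderiv_rpow_le (by linarith) (by linarith) hΩo hΩ hw hu hmin
  rw [mass_eq, hmin.mass_eq_one] at mass_le
  rw [mass_eq, energy_eq] at energy_le
  obtain ⟨x, hx⟩ := Function.support_nonempty_iff.2 hne
  obtain ⟨ρ, hρ, hρ_diam⟩ := exists_one_lt_mul_le diam_nonneg
    (diam_lt_diam_of_closure_subset hΩo hΩ ⟨x, hx⟩ hwΩ)
  have support_bounded : Bornology.IsBounded (Function.support w) :=
    hΩ.subset ((subset_tsupport w).trans hwΩ)
  refine energy_le.not_gt (muPQ_mul_integral_rpow_lt hp hpq hq hΩo hΩ hΩc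
    ⟨x, hwΩ (subset_tsupport w hx)⟩ hw support_bounded.isCompact_closure h.nonneg
    ⟨x, (h.nonneg x).lt_of_ne' hx⟩ hρ (fun y z hy hz => ?_) mass_le)
  exact (mul_le_mul_of_nonneg_left (dist_le_diam_of_mem support_bounded hy.ne' hz.ne')
    (by linarith)).trans hρ_diam

theorem isNodalRestriction_indicator {X : Type*} {u : X → ℝ} {D : Set X} (hD : ∀ x ∈ D, 0 < u x) :
    IsNodalRestriction (D.indicator u) u := fun x => by
  by_cases hx : x ∈ D
  · exact .inr ⟨indicator_of_mem hx u, hD x hx⟩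
  · exact .inl (indicator_of_notMem hx u)

theorem not_closure_connectedComponentIn_pos_subset (hp : 1 < p) (hpq : p ≤ q)
    (hq : ltCritical N p q) (hΩo : IsOpen Ω) (hΩ : Bornology.IsBounded Ω) (hΩc : Convex ℝ Ω)
    (hu : LipschitzWith K u) (hmin : IsNormalizedMinimizer p q Ω u)
    {x : EuclideanSpace ℝ (Fin N)} (hx : x ∈ Ω) (hux : 0 < u x) :
    ¬closure (connectedComponentIn {y | y ∈ Ω ∧ 0 < u y} x) ⊆ Ω := by
  intro hcl
  have := hmin.nontrivial_of_pos (by linarith) hΩo hΩ hu.continuous hx hux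
  have hF : IsOpen {y | y ∈ Ω ∧ 0 < u y} :=
    hΩo.inter (isOpen_lt continuous_const hu.continuous)
  have hF_zero : ∀ z ∈ frontier (connectedComponentIn {y | y ∈ Ω ∧ 0 < u y} x), u z = 0 := by
    intro z hz
    have hzF := notMem_of_mem_frontier_connectedComponentIn hF hz
    have h_nonneg : 0 ≤ u z := closure_minimal
      (fun y hy => (connectedComponentIn_subset _ x hy).2.le)
      (isClosed_le continuous_const hu.continuous) (frontier_subset_closure hz)
    exact h_nonneg.antisymm' (not_lt.1 fun hz_pos =>
      hzF ⟨hcl (frontier_subset_closure hz), hz_pos⟩)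
  have h_zero := (isNodalRestriction_indicator fun y hy =>
      (connectedComponentIn_subset _ x hy).2).eq_zero_of_tsupport_subset hp hpq hq hΩo hΩ hΩc
    (lipschitzWith_indicator_of_forall_mem_frontier hu hF_zero) hu hmin
    ((closure_mono support_indicator_subset).trans hcl)
  have hxD : x ∈ connectedComponentIn {y | y ∈ Ω ∧ 0 < u y} x := mem_connectedComponentIn ⟨hx, hux⟩
  exact hux.ne' (by simpa [hxD] using congrFun h_zero x)

theorem closure_connectedComponentIn_pos_inter_frontier_nonempty (hp : 1 < p) (hpq : p ≤ q)
    (hq : ltCritical N p q) (hΩo : IsOpen Ω) (hΩ : Bornology.IsBounded Ω) (hΩc : Convex ℝ Ω)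
    (hu : LipschitzOnWith K u (closure Ω)) (hmin : IsNormalizedMinimizer p q Ω u)
    {x : EuclideanSpace ℝ (Fin N)} (hx : x ∈ Ω) (hux : 0 < u x) :
    (closure (connectedComponentIn {y | y ∈ Ω ∧ 0 < u y} x) ∩ frontier Ω).Nonempty := by
  obtain ⟨g, hg, hug⟩ := hu.extend_real
  have hug : EqOn u g Ω := hug.mono subset_closure
  have superlevel_eq : {y | y ∈ Ω ∧ 0 < u y} = {y | y ∈ Ω ∧ 0 < g y} :=
    ext fun y => and_congr_right fun hy => by rw [hug hy]
  rw [superlevel_eq]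
  obtain ⟨z, hz, hzΩ⟩ := not_subset.1 (not_closure_connectedComponentIn_pos_subset hp hpq hq hΩo
    hΩ hΩc hg (hmin.congr hΩo hug) hx (hug hx ▸ hux))
  refine ⟨z, hz, hΩo.frontier_eq ▸ ⟨closure_mono (fun y hy => ?_) hz, hzΩ⟩⟩
  exact (connectedComponentIn_subset _ x hy).1

end NodalDomain

theorem nodal_domain_touches_boundary_general {N : ℕ} (p q : ℝ) (hp : 1 < p)
    (hpq : p ≤ q) (hq : ltCritical N p q)
    (Ω : Set (EuclideanSpace ℝ (Fin N))) (hΩo : IsOpen Ω)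
    (hΩb : Bornology.IsBounded Ω) (hΩc : Convex ℝ Ω)
    (u : EuclideanSpace ℝ (Fin N) → ℝ) (K : NNReal)
    (hu : LipschitzOnWith K u (closure Ω))
    (hconstraint : (∫ x in Ω, |u x| ^ (q - 2) * u x) = 0)
    (hnorm : (∫ x in Ω, |u x| ^ q) = 1)
    (hmin : (∫ x in Ω, ‖fderiv ℝ u x‖ ^ p) = muPQ p q Ω) :
    (∀ x ∈ Ω, 0 < u x →
      (closure (connectedComponentIn {y | y ∈ Ω ∧ 0 < u y} x) ∩ frontier Ω).Nonempty) ∧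
    (∀ x ∈ Ω, u x < 0 →
      (closure (connectedComponentIn {y | y ∈ Ω ∧ u y < 0} x) ∩ frontier Ω).Nonempty) := by
  have minimizer : IsNormalizedMinimizer p q Ω u := ⟨hconstraint, hnorm, hmin⟩
  refine ⟨fun x hx hux => closure_connectedComponentIn_pos_inter_frontier_nonempty hp hpq hq hΩo
    hΩb hΩc hu minimizer hx hux, fun x hx hux => ?_⟩
  simpa only [Pi.neg_apply, neg_pos] using
    closure_connectedComponentIn_pos_inter_frontier_nonempty hp hpq hq hΩo hΩb hΩc hu.neg
      minimizer.neg hx (neg_pos.2 hux)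

/-- Proposition 5.1, nodal domain property. Let `1 < p ≤ q < p*`,
`Ω ⊂ ℝ^N` open bounded convex, and let `u` be a Lipschitz function on `closure Ω` with
`∫_Ω |u|^(q-2) u = 0`, `∫_Ω |u|^q = 1` and `∫_Ω |∇u|^p = μ_{p,q}(Ω)` (a minimizer).
Then every connected component of `{u > 0}` and of `{u < 0}` inside `Ω` has closure
meeting `∂Ω`; no nodal domain is compactly contained in `Ω`. -/
theorem nodal_domain_touches_boundary {N : ℕ} (hN : 2 ≤ N) (p q : ℝ) (hp : 1 < p)
    (hpq : p ≤ q) (hq : ltCritical N p q)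
    (Ω : Set (EuclideanSpace ℝ (Fin N))) (hΩo : IsOpen Ω)
    (hΩb : Bornology.IsBounded Ω) (hΩc : Convex ℝ Ω) (hΩne : Ω.Nonempty)
    (u : EuclideanSpace ℝ (Fin N) → ℝ) (K : NNReal)
    (hu : LipschitzOnWith K u (closure Ω))
    (hconstraint : (∫ x in Ω, |u x| ^ (q - 2) * u x) = 0)
    (hnorm : (∫ x in Ω, |u x| ^ q) = 1)
    (hmin : (∫ x in Ω, ‖fderiv ℝ u x‖ ^ p) = muPQ p q Ω) :
    (∀ x ∈ Ω, 0 < u x →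
      (closure (connectedComponentIn {y | y ∈ Ω ∧ 0 < u y} x) ∩ frontier Ω).Nonempty) ∧
    (∀ x ∈ Ω, u x < 0 →
      (closure (connectedComponentIn {y | y ∈ Ω ∧ u y < 0} x) ∩ frontier Ω).Nonempty) :=
  nodal_domain_touches_boundary_general p q hp hpq hq Ω hΩo hΩb hΩc u K hu hconstraint hnorm hmin
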